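/- arXiv:2005.09269 — 2 statements merged into one kernel-verified Lean document; each statement's English description precedes it below -/
import Mathlib

section
/- Let H = {rrb} (the single pattern consisting of a triangle with two red edges and one blue edge). Then for every positive integer n, h_2(n, H) = ⌈√n⌉. That is: every 3-edge-coloring of K_n containing no triangle with exactly two red edges and one blue edge has a set of at least ⌈√n⌉ vertices whose induced edges use at most two colors, and there exists such a coloring in which every set of vertices inducing at most two colors has size at most ⌈√n⌉. -/
/-- The three edge colors: red, blue, yellow. -/
inductive Col : Type
  | r | b | y
  deriving DecidableEq

/-- A (symmetric) 3-edge-coloring of the complete graph `K_n` on vertex set `Fin n`. -/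
structure Coloring (n : ℕ) where
  col : Fin n → Fin n → Col
  symm : ∀ i j, col i j = col j i

/-- The pattern (multiset of edge colors) of the triangle on vertices `u, v, w`. -/
def triPattern {n : ℕ} (c : Coloring n) (u v w : Fin n) : Multiset Col :=
  {c.col u v, c.col v w, c.col u w}

/-- The coloring `c` contains the pattern `P`: some triangle has color multiset `P`. -/
def Contains {n : ℕ} (c : Coloring n) (P : Multiset Col) : Prop :=
  ∃ u v w : Fin n, u ≠ v ∧ v ≠ w ∧ u ≠ w ∧ triPattern c u v w = P

/-- The coloring `c` avoids every pattern in the family `H`. -/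
def Avoids {n : ℕ} (c : Coloring n) (H : Set (Multiset Col)) : Prop :=
  ∀ P ∈ H, ¬ Contains c P

/-- A vertex set `S` is two-colored under `c`: the edges inside `S` use at most
two of the three colors, i.e. some color is missing on the edges inside `S`. -/
def TwoColored {n : ℕ} (c : Coloring n) (S : Finset (Fin n)) : Prop :=
  ∃ x : Col, ∀ i ∈ S, ∀ j ∈ S, i ≠ j → c.col i j ≠ x

/-- `h2 c` is the maximum size of a vertex set whose induced edges use at most
two of the three colors. -/
noncomputable def h2 {n : ℕ} (c : Coloring n) : ℕ :=
  sSup {k | ∃ S : Finset (Fin n), TwoColored c S ∧ S.card = k}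

/-- `h2n n H = min { h2 c : c a 3-edge-coloring of K_n avoiding all patterns in H }`. -/
noncomputable def h2n (n : ℕ) (H : Set (Multiset Col)) : ℕ :=
  sInf {m | ∃ c : Coloring n, Avoids c H ∧ h2 c = m}

/-- Pattern abbreviations. -/
def Prrr : Multiset Col := {Col.r, Col.r, Col.r}
def Pbbb : Multiset Col := {Col.b, Col.b, Col.b}
def Pyyy : Multiset Col := {Col.y, Col.y, Col.y}
def Prrb : Multiset Col := {Col.r, Col.r, Col.b}
def Prry : Multiset Col := {Col.r, Col.r, Col.y}
def Pbbr : Multiset Col := {Col.b, Col.b, Col.r}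
def Pbby : Multiset Col := {Col.b, Col.b, Col.y}
def Pyyr : Multiset Col := {Col.y, Col.y, Col.r}
def Pyyb : Multiset Col := {Col.y, Col.y, Col.b}
def Prby : Multiset Col := {Col.r, Col.b, Col.y}

/-!
A coloring avoids `rrb` exactly when no two red neighbours of a vertex `v` are joined in blue, so
`v` together with its red neighbours spans no blue edge and every red degree is less than `h2 c`.
A largest red-free set `I` dominates the red graph, whence `n ≤ |I| * h2 c ≤ h2 c ^ 2`.

For sharpness, place the vertices in a square grid of side `m = ⌈√n⌉` and color an edge red inside a
row, blue inside a column, and yellow otherwise. Superimpose a Latin square of order `m`: the rows,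
the columns and the symbol classes are then `m` red, `m` blue and `m` yellow cliques covering
all vertices, and a set missing a color meets each clique of that color at most once.
-/

open Finset

theorem exists_isIndepSet_card_le_sum_degree_add_one {V : Type*} [Fintype V] (G : SimpleGraph V)
    [DecidableRel G.Adj] :
    ∃ I : Finset V, G.IsIndepSet I ∧ Fintype.card V ≤ ∑ v ∈ I, (G.degree v + 1) := by
  classical
  obtain ⟨I, hI⟩ := G.exists_isNIndepSet_indepNum
  have dominating : univ ⊆ I.biUnion fun v => insert v (G.neighborFinset v) := by
    intro w _
    by_contra hw
    simp only [mem_biUnion, mem_insert, SimpleGraph.mem_neighborFinset, not_exists, not_and,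
      not_or] at hw
    have hwI : w ∉ I := fun h => (hw w h).1 rfl
    have insert_indep : G.IsIndepSet (insert w I : Finset V) := by
      rw [coe_insert, SimpleGraph.isIndepSet_iff, Set.pairwise_insert]
      exact ⟨hI.isIndepSet, fun v hv _ => ⟨fun h => (hw v hv).2 h.symm, (hw v hv).2⟩⟩
    have card_le := insert_indep.card_le_indepNum
    rw [card_insert_of_notMem hwI, hI.card_eq] at card_le
    exact Nat.not_succ_le_self _ card_le
  refine ⟨I, hI.isIndepSet, (card_le_card dominating).trans <| card_biUnion_le.trans ?_⟩
  exact sum_le_sum fun v _ => card_insert_le _ _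

theorem triple_eq_insert_pair_iff {α : Type*} {a b d x z : α} :
    ({a, b, d} : Multiset α) = {x, x, z} ↔
      (a = x ∧ b = x ∧ d = z) ∨ (a = x ∧ b = z ∧ d = x) ∨ (a = z ∧ b = x ∧ d = x) := by
  classical
  simp only [Multiset.ext, Multiset.insert_eq_cons, Multiset.count_cons, Multiset.count_singleton]
  constructor
  · intro count_eq
    have count_x := count_eq x
    have count_z := count_eq z
    grind
  · grind

namespace Coloring

variable {n : ℕ} {c : Coloring n} {x z : Col}

/-- The graph on the vertex set of `c` formed by the edges of color `x`. -/
def colorGraph (c : Coloring n) (x : Col) : SimpleGraph (Fin n) where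
  Adj u v := u ≠ v ∧ c.col u v = x
  symm := ⟨fun u v h => ⟨h.1.symm, c.symm v u ▸ h.2⟩⟩
  loopless := ⟨fun _ h => h.1 rfl⟩

instance : DecidableRel (c.colorGraph x).Adj :=
  fun _ _ => inferInstanceAs (Decidable (_ ∧ _))

theorem twoColored_iff_exists_isIndepSet {S : Finset (Fin n)} :
    TwoColored c S ↔ ∃ x, (c.colorGraph x).IsIndepSet S := by
  refine exists_congr fun x => ⟨fun h u hu v hv huv huv_adj => h u hu v hv huv huv_adj.2, ?_⟩
  exact fun h u hu v hv huv hx => h hu hv huv ⟨huv, hx⟩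

theorem avoids_singleton_triple_iff :
    Avoids c {{x, x, z}} ↔ ∀ ⦃u v w⦄, (c.colorGraph x).Adj v u → (c.colorGraph x).Adj v w →
      ¬ (c.colorGraph z).Adj u w := by
  constructor
  · intro hc u v w ⟨hvu, huv_x⟩ ⟨hvw, hvw_x⟩ ⟨huw, huw_z⟩
    refine hc _ rfl ⟨u, v, w, hvu.symm, hvw, huw, ?_⟩
    rw [triPattern, c.symm u v, huv_x, hvw_x, huw_z]
  · rintro h P rfl ⟨u, v, w, huv, hvw, huw, hP⟩
    rcases triple_eq_insert_pair_iff.1 hP with ⟨h₁, h₂, h₃⟩ | ⟨h₁, h₂, h₃⟩ | ⟨h₁, h₂, h₃⟩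
    · exact h ⟨huv.symm, c.symm v u ▸ h₁⟩ ⟨hvw, h₂⟩ ⟨huw, h₃⟩
    · exact h ⟨huv, h₁⟩ ⟨huw, h₃⟩ ⟨hvw, h₂⟩
    · exact h ⟨huw.symm, c.symm w u ▸ h₃⟩ ⟨hvw.symm, c.symm w v ▸ h₂⟩ ⟨huv, h₁⟩

theorem isIndepSet_insert_neighborSet (hc : Avoids c {{x, x, z}}) (hxz : x ≠ z) (v : Fin n) :
    (c.colorGraph z).IsIndepSet (insert v ((c.colorGraph x).neighborSet v)) := by
  rw [SimpleGraph.isIndepSet_iff, Set.pairwise_insert]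
  have not_adj : ∀ u ∈ (c.colorGraph x).neighborSet v, ¬ (c.colorGraph z).Adj v u :=
    fun u hu hvu => hxz (hu.2.symm.trans hvu.2)
  exact ⟨fun u hu w hw _ => avoids_singleton_triple_iff.1 hc hu hw,
    fun u hu _ => ⟨not_adj u hu, fun huv => not_adj u hu huv.symm⟩⟩

theorem card_le_h2 {S : Finset (Fin n)} (hS : TwoColored c S) : #S ≤ h2 c := by
  refine le_csSup ⟨n, ?_⟩ ⟨S, hS, rfl⟩
  rintro _ ⟨T, -, rfl⟩
  exact card_finset_fin_le T

theorem card_le_h2_of_isIndepSet {S : Finset (Fin n)} (hS : (c.colorGraph x).IsIndepSet S) :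
    #S ≤ h2 c :=
  card_le_h2 (twoColored_iff_exists_isIndepSet.2 ⟨x, hS⟩)

theorem degree_add_one_le_h2 (hc : Avoids c {{x, x, z}}) (hxz : x ≠ z) (v : Fin n) :
    (c.colorGraph x).degree v + 1 ≤ h2 c := by
  rw [← SimpleGraph.card_neighborFinset_eq_degree,
    ← card_insert_of_notMem ((c.colorGraph x).notMem_neighborFinset_self v)]
  refine card_le_h2_of_isIndepSet (x := z) ?_
  rw [coe_insert, SimpleGraph.coe_neighborFinset]
  exact isIndepSet_insert_neighborSet hc hxz v

theorem le_h2_sq (hc : Avoids c {{x, x, z}}) (hxz : x ≠ z) : n ≤ h2 c ^ 2 := by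
  obtain ⟨I, hI, hn⟩ := exists_isIndepSet_card_le_sum_degree_add_one (c.colorGraph x)
  calc
    n = Fintype.card (Fin n) := (Fintype.card_fin n).symm
    _ ≤ ∑ v ∈ I, ((c.colorGraph x).degree v + 1) := hn
    _ ≤ #I * h2 c := sum_le_card_nsmul _ _ _ fun v _ => degree_add_one_le_h2 hc hxz v
    _ ≤ h2 c * h2 c := Nat.mul_le_mul_right _ (card_le_h2_of_isIndepSet hI)
    _ = h2 c ^ 2 := (sq _).symm

theorem h2_le_of_forall_compl_colorable {m : ℕ} (h : ∀ x, (c.colorGraph x)ᶜ.Colorable m) :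
    h2 c ≤ m := by
  refine csSup_le ⟨0, ∅, ⟨.r, by simp⟩, rfl⟩ ?_
  rintro _ ⟨S, hS, rfl⟩
  obtain ⟨x, hx⟩ := twoColored_iff_exists_isIndepSet.1 hS
  exact SimpleGraph.IsClique.card_le_of_colorable ((SimpleGraph.isClique_compl _).2 hx) (h x)

theorem compl_colorable_of_fibers {α : Type*} [Fintype α] (f : Fin n → α)
    (hf : ∀ u v, u ≠ v → f u = f v → c.col u v = x) :
    (c.colorGraph x)ᶜ.Colorable (Fintype.card α) :=
  let coloring : (c.colorGraph x)ᶜ.Coloring α :=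
    .mk f fun {u v} h huv => h.2 ⟨h.1, hf u v h.1 huv⟩
  coloring.colorable

/-- The coloring of vertices placed in a grid by `p`, with `(p i).1` the row and `(p i).2` the
column of `i`: red within a row, blue within a column, yellow otherwise. -/
def grid {α β : Type*} [DecidableEq α] [DecidableEq β] (p : Fin n → α × β) : Coloring n where
  col i j := if (p i).1 = (p j).1 then .r else if (p i).2 = (p j).2 then .b else .y
  symm i j := by simp only [eq_comm]

theorem grid_col_eq_r_iff {α β : Type*} [DecidableEq α] [DecidableEq β] {p : Fin n → α × β}
    {u v : Fin n} : (grid p).col u v = .r ↔ (p u).1 = (p v).1 := by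
  simp only [grid]
  grind

theorem avoids_grid {α β : Type*} [DecidableEq α] [DecidableEq β] (p : Fin n → α × β) {z : Col}
    (hz : z ≠ .r) : Avoids (grid p) {{.r, .r, z}} := by
  refine avoids_singleton_triple_iff.2 fun u v w hvu hvw huw => hz (huw.2.symm.trans ?_)
  exact grid_col_eq_r_iff.2 <|
    (grid_col_eq_r_iff.1 hvu.2).symm.trans (grid_col_eq_r_iff.1 hvw.2)

-- On a finite type, cancellativity says that the addition table is a Latin square.
theorem h2_grid_le {G : Type*} [Add G] [IsCancelAdd G] [Fintype G] [DecidableEq G]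
    {p : Fin n → G × G} (hp : p.Injective) : h2 (grid p) ≤ Fintype.card G := by
  refine h2_le_of_forall_compl_colorable fun x => ?_
  cases x with
  | r => exact compl_colorable_of_fibers (fun u => (p u).1) fun u v _ row => if_pos row
  | b =>
    refine compl_colorable_of_fibers (fun u => (p u).2) fun u v huv col => ?_
    have row : (p u).1 ≠ (p v).1 := fun row => huv (hp (Prod.ext row col))
    exact (if_neg row).trans (if_pos col)
  | y =>
    refine compl_colorable_of_fibers (fun u => (p u).1 + (p u).2) fun u v huv symbol => ?_
    have row : (p u).1 ≠ (p v).1 := fun row =>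
      huv (hp (Prod.ext row (add_left_cancel (row ▸ symbol))))
    have col : (p u).2 ≠ (p v).2 := fun col => row (add_right_cancel (col ▸ symbol))
    exact (if_neg row).trans (if_neg col)

theorem exists_avoids_h2_le {m : ℕ} [NeZero m] (h : n ≤ m ^ 2) :
    ∃ c : Coloring n, Avoids c {Prrb} ∧ h2 c ≤ m := by
  have card_le : Fintype.card (Fin n) ≤ Fintype.card (ZMod m × ZMod m) := by
    rwa [Fintype.card_fin, Fintype.card_prod, ZMod.card, ← sq]
  obtain ⟨p⟩ := Function.Embedding.nonempty_of_card_le card_le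
  exact ⟨grid p, avoids_grid p (by decide), (h2_grid_le p.injective).trans_eq (ZMod.card m)⟩

end Coloring

theorem h2n_eq_of_forall_le {n m : ℕ} {H : Set (Multiset Col)}
    (lower : ∀ c : Coloring n, Avoids c H → m ≤ h2 c)
    (upper : ∃ c : Coloring n, Avoids c H ∧ h2 c ≤ m) : h2n n H = m := by
  obtain ⟨c, hc, hcm⟩ := upper
  refine IsLeast.csInf_eq ⟨⟨c, hc, hcm.antisymm (lower c hc)⟩, ?_⟩
  rintro _ ⟨c', hc', rfl⟩
  exact lower c' hc'

theorem ceil_sqrt_le_iff {x : ℝ} {k : ℕ} : ⌈√x⌉₊ ≤ k ↔ x ≤ (k : ℝ) ^ 2 := by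
  rw [Nat.ceil_le, Real.sqrt_le_left k.cast_nonneg]

theorem stmt0 (n : ℕ) (hn : 0 < n) :
    h2n n {Prrb} = ⌈Real.sqrt n⌉₊ := by
  have ceil_le (k : ℕ) : ⌈√(n : ℝ)⌉₊ ≤ k ↔ n ≤ k ^ 2 := by
    exact_mod_cast ceil_sqrt_le_iff (x := n)
  have ceil_pos : 0 < ⌈√(n : ℝ)⌉₊ := Nat.ceil_pos.2 (Real.sqrt_pos.2 (Nat.cast_pos.2 hn))
  have : NeZero ⌈√(n : ℝ)⌉₊ := ⟨ceil_pos.ne'⟩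
  exact h2n_eq_of_forall_le (fun c hc => (ceil_le _).2 (Coloring.le_h2_sq hc (by decide)))
    (Coloring.exists_avoids_h2_le ((ceil_le _).1 le_rfl))
end

section
/- Let H = {rrr} (the single pattern consisting of a monochromatic red triangle). Then h_2(n, H) = Θ(√(n log n)): there exist constants C1, C2 > 0 and an integer n0 such that for all n ≥ n0, C1·√(n·log n) ≤ h_2(n, H) ≤ C2·√(n·log n), where log denotes the base-2 logarithm. -/
/-!
Avoiding `rrr` means that the red graph is triangle-free, and red-free sets of vertices are
two-colored, so the lower bound is the Ramsey bound on the independence number of a triangle-free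
graph: a vertex of degree at least `√(n log n)` has an independent neighbourhood of that size, and
otherwise Shearer's bound applies.

For the upper bound, start from a triangle-free graph on `n` vertices with independence number
`O(√(n log n))` and color its edges red. Lay the vertices out in `√n` rows of length `√n`, and color
the remaining edges by whether they stay within a row. A set missing one of the two other colors is
then either red within each row, so that it has at most two vertices there, or red between any two
rows, so that it meets at most two of them; it has `O(√n)` vertices either way.

The triangle-free graph is a two-bite product. Take two random graphs on `t ^ 7` vertices and
delete a maximal family of edge-disjoint triangles from each. On the product of the two vertex
sets, use an edge of one factor unless the other coordinates have a common neighbour in the other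
factor; no triangle is ever closed. The product is induced on a sparse random set of `t ^ 8 ≈ n`
pairs. A large independent set has many distinct coordinates in one of the factors, say the second.
Exposing the first factor leaves a constant proportion of the pairs of second coordinates open,
and the second factor is very likely to have edges among these, more than the deletion can destroy.
-/

namespace TwoBites

section ProbabilitySpace
open MeasureTheory
variable {Ω : Type*} [MeasurableSpace Ω] {μ : Measure Ω} [IsProbabilityMeasure μ]

lemma exists_of_measureReal_not_lt_one {P : Ω → Prop} (h : μ.real {ω | ¬ P ω} < 1) :
    ∃ ω, P ω := by
  by_contra! hP
  simp [hP] at h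

variable [Finite Ω] [MeasurableSingletonClass Ω]

lemma measureReal_prod_le_of_forall {s : Set (Ω × Ω)} {c : ℝ} (hc : 0 ≤ c)
    (h : ∀ a, μ.real (Prod.mk a ⁻¹' s) ≤ c) : (μ.prod μ).real s ≤ c := by
  refine ENNReal.toReal_le_of_le_ofReal hc ?_
  rw [Measure.prod_apply s.toFinite.measurableSet]
  calc ∫⁻ a, μ (Prod.mk a ⁻¹' s) ∂μ ≤ ∫⁻ _, ENNReal.ofReal c ∂μ :=
        lintegral_mono fun a ↦ (ENNReal.le_ofReal_iff_toReal_le (measure_ne_top _ _) hc).2 (h a)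
    _ = ENNReal.ofReal c := by simp

-- Each of the four ways in which an independent pair `(a, b)` can fail has probability below `1/4`.
lemma exists_pair_of_measureReal_not_lt {G : Ω → Prop} {X : Ω → Ω → Prop} {c : ℝ} (hc : c < 1 / 4)
    (hG : μ.real {a | ¬ G a} ≤ c) (hX : ∀ a, G a → μ.real {b | ¬ X a b} ≤ c) :
    ∃ a b, G a ∧ G b ∧ X a b ∧ X b a := by
  have hc0 : 0 ≤ c := measureReal_nonneg.trans hG
  let bad : Set (Ω × Ω) := {z | G z.1 ∧ ¬ X z.1 z.2}
  have hbad : (μ.prod μ).real bad ≤ c := by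
    refine measureReal_prod_le_of_forall hc0 fun a ↦ ?_
    by_cases ha : G a
    · simpa [bad, ha] using hX a ha
    · simpa [bad, ha] using hc0
  have hbad' : (μ.prod μ).real (Prod.swap ⁻¹' bad) ≤ c := by
    rwa [← map_measureReal_apply measurable_swap bad.toFinite.measurableSet, Measure.prod_swap]
  have hfst : (μ.prod μ).real ({a | ¬ G a} ×ˢ Set.univ) ≤ c := by
    rw [measureReal_prod_prod]; simpa using hG
  have hsnd : (μ.prod μ).real (Set.univ ×ˢ {a | ¬ G a}) ≤ c := by
    rw [measureReal_prod_prod]; simpa using hG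
  obtain ⟨⟨a, b⟩, h⟩ := exists_of_measureReal_not_lt_one (μ := μ.prod μ)
    (P := fun z ↦ z ∉ (({a | ¬ G a} ×ˢ Set.univ) ∪ (Set.univ ×ˢ {a | ¬ G a})) ∪
      (bad ∪ Prod.swap ⁻¹' bad)) (by
      simp only [not_not, Set.ofPred_mem_eq]
      grw [measureReal_union_le, measureReal_union_le, measureReal_union_le]
      linarith)
  simp only [bad, Set.mem_union, Set.mem_prod, Set.mem_univ, Set.mem_preimage, Set.mem_ofPred_eq,
    Prod.fst_swap, Prod.snd_swap] at h
  exact ⟨a, b, by tauto⟩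

end ProbabilitySpace

lemma choose_mul_pow_le (N k : ℕ) {p : ℝ} (hp : 0 ≤ p) :
    (N.choose k : ℝ) * p ^ k ≤ (3 * N * p / k) ^ k := by
  rcases k.eq_zero_or_pos with rfl | hk
  · simp
  have : (0 : ℝ) < k.factorial := by positivity
  have hexp : (k : ℝ) ^ k / k.factorial ≤ 3 ^ k :=
    calc (k : ℝ) ^ k / k.factorial ≤ Real.exp k := Real.pow_div_factorial_le_exp _ k.cast_nonneg k
      _ = Real.exp 1 ^ k := (Real.exp_one_pow k).symm
      _ ≤ 3 ^ k := by gcongr; exact Real.exp_one_lt_three.le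
  calc (N.choose k : ℝ) * p ^ k ≤ N ^ k / k.factorial * p ^ k := by
        gcongr; exact Nat.choose_le_pow_div k N
    _ = (k ^ k / k.factorial) * (N * p / k) ^ k := by rw [div_pow, mul_pow]; field_simp
    _ ≤ 3 ^ k * (N * p / k) ^ k := by gcongr
    _ = (3 * N * p / k) ^ k := by rw [← mul_pow]; ring

section RandomSubset
open MeasureTheory ProbabilityTheory Finset unitInterval
variable {E : Type*} (p : I)

open scoped Classical in
lemma integral_setBernoulli_prod_ite [Fintype E] (f g : E → ℝ) :
    ∫ A : Set E, ∏ e, (if e ∈ A then f e else g e) ∂setBer(Set.univ, p)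
      = ∏ e, (p * f e + (1 - p) * g e) := by
  rw [integral_fintype .of_finite, Fintype.prod_add, ← Fintype.finsetEquivSet.sum_comp]
  refine sum_congr rfl fun A _ ↦ ?_
  have hA : setBer((Set.univ : Set E), p).real {(A : Set E)} = p ^ #A * (1 - p : ℝ) ^ #Aᶜ := by
    rw [setBernoulli_real_singleton p (Set.subset_univ _) Set.finite_univ, Set.ncard_coe_finset,
      ← Set.compl_eq_univ_sdiff, ← coe_compl, Set.ncard_coe_finset]
  simp only [Fintype.finsetEquivSet_apply, mem_coe, hA, smul_eq_mul, prod_ite, prod_mul_distrib,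
    prod_const, filter_mem_eq_inter, univ_inter]
  simp only [← mem_compl, filter_mem_eq_inter, univ_inter]
  ring

variable [Finite E]

lemma setBernoulli_real_superset (S : Finset E) :
    setBer((Set.univ : Set E), p).real {A | ↑S ⊆ A} = p ^ #S := by
  classical
  have := Fintype.ofFinite E
  have h := integral_setBernoulli_prod_ite p (fun _ ↦ 1) (fun e ↦ if e ∈ S then 0 else 1)
  have hind : ∀ A : Set E, ∏ e, (if e ∈ A then (1 : ℝ) else if e ∈ S then 0 else 1)
      = Set.indicator {A : Set E | ↑S ⊆ A} 1 A := fun A ↦ by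
    by_cases hS : (S : Set E) ⊆ A
    · rw [Set.indicator_of_mem hS]
      exact prod_eq_one fun e _ ↦ by split_ifs with h₁ h₂ <;> simp_all [Set.subset_def]
    · rw [Set.indicator_of_notMem hS]
      obtain ⟨e, heS, heA⟩ := Set.not_subset.1 hS
      exact prod_eq_zero (mem_univ e) (by simp_all)
  simp only [hind] at h
  rw [integral_indicator_one (Set.toFinite _).measurableSet] at h
  rw [h, ← prod_const, ← prod_subset (subset_univ S)]
  · exact prod_congr rfl fun e he ↦ by simp [he]
  · intro e _ he
    simp [he]

open scoped Classical in
lemma setBernoulli_real_le_card (O : Finset E) (k : ℕ) :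
    setBer((Set.univ : Set E), p).real {A | k ≤ #{e ∈ O | e ∈ A}} ≤ (3 * #O * p / k) ^ k :=
  calc setBer((Set.univ : Set E), p).real {A | k ≤ #{e ∈ O | e ∈ A}}
      ≤ setBer((Set.univ : Set E), p).real (⋃ S ∈ O.powersetCard k, {A | ↑S ⊆ A}) := by
        refine measureReal_mono (fun A hA ↦ ?_) (measure_ne_top _ _)
        obtain ⟨S, hS, hSk⟩ := exists_subset_card_eq hA
        simp only [Set.mem_iUnion]
        exact ⟨S, mem_powersetCard.2 ⟨hS.trans (filter_subset _ _), hSk⟩,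
          fun e he ↦ (mem_filter.1 (hS he)).2⟩
    _ ≤ ∑ S ∈ O.powersetCard k, setBer((Set.univ : Set E), p).real {A | ↑S ⊆ A} :=
        measureReal_biUnion_finset_le _ _
    _ = ∑ _S ∈ O.powersetCard k, (p : ℝ) ^ k := sum_congr rfl fun S hS ↦ by
        rw [setBernoulli_real_superset, (mem_powersetCard.1 hS).2]
    _ = (#O).choose k * (p : ℝ) ^ k := by simp
    _ ≤ (3 * #O * p / k) ^ k := choose_mul_pow_le _ _ p.2.1

open scoped Classical in
-- Markov's inequality for `2⁻¹ ^ #(O ∩ A)`, whose mean is `(1 - p / 2) ^ #O`.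
lemma setBernoulli_real_card_le (O : Finset E) (k : ℕ) :
    setBer((Set.univ : Set E), p).real {A | #{e ∈ O | e ∈ A} ≤ k} ≤
      2 ^ k * Real.exp (-(p * #O / 2)) := by
  have := Fintype.ofFinite E
  set μ := setBer((Set.univ : Set E), p)
  have hmean : ∫ A, (2⁻¹ : ℝ) ^ #{e ∈ O | e ∈ A} ∂μ = (1 - p / 2) ^ #O := by
    have h := integral_setBernoulli_prod_ite p (fun e ↦ if e ∈ O then 2⁻¹ else 1) (fun _ ↦ 1)
    have hpow : ∀ A : Set E, ∏ e, (if e ∈ A then if e ∈ O then (2⁻¹ : ℝ) else 1 else 1)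
        = 2⁻¹ ^ #{e ∈ O | e ∈ A} := fun A ↦ by
      have hO : O.filter (· ∈ A) = univ.filter fun e ↦ e ∈ A ∧ e ∈ O := by ext; simp [and_comm]
      rw [hO]
      simp [prod_ite, ← ite_and]
    simp only [hpow] at h
    rw [h, ← prod_const, ← prod_subset (subset_univ O)]
    · exact prod_congr rfl fun e he ↦ by simp only [he, if_true]; ring
    · intro e _ he
      simp [he]
  have hmarkov := mul_meas_ge_le_integral_of_nonneg (μ := μ)
    (f := fun A : Set E ↦ (2⁻¹ : ℝ) ^ #{e ∈ O | e ∈ A})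
    (.of_forall fun A ↦ by positivity) .of_finite (2⁻¹ ^ k)
  rw [hmean] at hmarkov
  have hle : {A : Set E | #{e ∈ O | e ∈ A} ≤ k} ⊆
      {A : Set E | (2⁻¹ : ℝ) ^ k ≤ 2⁻¹ ^ #{e ∈ O | e ∈ A}} :=
    fun A hA ↦ pow_le_pow_of_le_one (by norm_num : (0 : ℝ) ≤ 2⁻¹) (by norm_num) hA
  have hexp : (1 - p / 2 : ℝ) ≤ Real.exp (-(p / 2)) := by
    linarith [Real.add_one_le_exp (-(p / 2) : ℝ)]
  calc μ.real {A : Set E | #{e ∈ O | e ∈ A} ≤ k}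
      ≤ μ.real {A : Set E | (2⁻¹ : ℝ) ^ k ≤ 2⁻¹ ^ #{e ∈ O | e ∈ A}} := measureReal_mono hle
    _ = 2 ^ k * (2⁻¹ ^ k * μ.real {A : Set E | (2⁻¹ : ℝ) ^ k ≤ 2⁻¹ ^ #{e ∈ O | e ∈ A}}) := by
        rw [← mul_assoc, ← mul_pow]; norm_num
    _ ≤ 2 ^ k * (1 - p / 2) ^ #O := by gcongr
    _ ≤ 2 ^ k * Real.exp (-(p / 2)) ^ #O := by
        gcongr
        linarith [p.2.2]
    _ = 2 ^ k * Real.exp (-(p * #O / 2)) := by rw [← Real.exp_nat_mul]; ring_nf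

end RandomSubset

section SparseRelation
open Finset
open scoped Classical
variable {α β ι : Type*}

/-- A relation is `K`-sparse up to scale `L` if, for every `0 < n ≤ L`, two sets of at most `n`
elements have fewer than `K * n` related pairs. Random graphs have this property at scales where
the expected number of related pairs is small. -/
def IsSparse (r : α → β → Prop) (K L : ℕ) : Prop :=
  ∀ n, 0 < n → n ≤ L → ∀ (X : Finset α) (Y : Finset β), #X ≤ n → #Y ≤ n →
    #(Rel.interedges r X Y) < K * n

/-- All rows and columns of the relation have at most `D` elements. -/
def DegreesLE (r : α → β → Prop) (D : ℕ) : Prop :=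
  (∀ x (Y : Finset β), #{y ∈ Y | r x y} ≤ D) ∧ ∀ y (X : Finset α), #{x ∈ X | r x y} ≤ D

/-- The number of indices `i` such that `φ i` is related to `x`. -/
noncomputable def multiDegree [Fintype ι] (r : α → β → Prop) (φ : ι → β) (x : α) : ℕ :=
  #{i | r x (φ i)}

variable {r : α → β → Prop} {K L D s : ℕ}

lemma card_interedges_eq_sum (X : Finset α) (Y : Finset β) :
    #(Rel.interedges r X Y) = ∑ y ∈ Y, #{x ∈ X | r x y} := by
  simp only [Rel.interedges, card_filter, sum_product_right]

lemma IsSparse.card_filter_lt_card_le (h : IsSparse r K L) {X : Finset α} (hX : #X ≤ L)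
    (Y : Finset β) : #{y ∈ Y | K < #{x ∈ X | r x y}} ≤ #X := by
  rcases X.eq_empty_or_nonempty with rfl | hne
  · simp
  by_contra! hcard
  obtain ⟨Z, hZ, hZX⟩ := exists_subset_card_eq hcard.le
  refine (h #X hne.card_pos hX X Z le_rfl hZX.le).not_ge ?_
  calc K * #X = ∑ _y ∈ Z, K := by rw [sum_const, hZX, smul_eq_mul, mul_comm]
    _ ≤ ∑ y ∈ Z, #{x ∈ X | r x y} := sum_le_sum fun y hy ↦ (mem_filter.1 (hZ hy)).2.le
    _ = #(Rel.interedges r X Z) := (card_interedges_eq_sum X Z).symm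

variable [Fintype ι] {φ : ι → β}

lemma sum_multiDegree (X : Finset α) :
    ∑ x ∈ X, multiDegree r φ x = ∑ i, #{x ∈ X | r x (φ i)} := by
  simp only [multiDegree, card_filter]
  exact sum_comm

lemma sum_comp_le_mul_sum (hφ : ∀ y, #{i | φ i = y} ≤ s) (f : β → ℕ) (Y : Finset β) :
    ∑ i with φ i ∈ Y, f (φ i) ≤ s * ∑ y ∈ Y, f y := by
  rw [← sum_fiberwise_of_maps_to (t := Y) (g := φ) (fun i hi ↦ (mem_filter.1 hi).2), mul_sum]
  refine sum_le_sum fun y _ ↦ ?_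
  calc ∑ i ∈ {i | φ i ∈ Y} with φ i = y, f (φ i) = ∑ i ∈ {i | φ i ∈ Y} with φ i = y, f y :=
        sum_congr rfl fun i hi ↦ by rw [(mem_filter.1 hi).2]
    _ = #{i ∈ {i | φ i ∈ Y} | φ i = y} * f y := by rw [sum_const, smul_eq_mul]
    _ ≤ s * f y := by
        gcongr
        exact (card_le_card (filter_subset_filter _ (filter_subset _ _))).trans (hφ y)

-- Columns of degree at most `K` into `X` contribute the first term; there are at most `#X` others,
-- which span fewer than `K * #X` related pairs with `X`.
lemma IsSparse.sum_multiDegree_le (h : IsSparse r K L) (hφ : ∀ y, #{i | φ i = y} ≤ s)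
    {X : Finset α} (hX : #X ≤ L) :
    ∑ x ∈ X, multiDegree r φ x ≤ K * Fintype.card ι + s * (K * #X) := by
  rcases X.eq_empty_or_nonempty with rfl | hne
  · simp
  set Y : Finset β := {y ∈ univ.image φ | K < #{x ∈ X | r x y}} with hY
  have hheavy : ∑ i with φ i ∈ Y, #{x ∈ X | r x (φ i)} ≤ s * (K * #X) := by
    grw [sum_comp_le_mul_sum hφ (fun y ↦ #{x ∈ X | r x y}) Y, ← card_interedges_eq_sum,
      h #X hne.card_pos hX X Y le_rfl (h.card_filter_lt_card_le hX _)]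
  have hlight : ∑ i with φ i ∉ Y, #{x ∈ X | r x (φ i)} ≤ K * Fintype.card ι := by
    refine (sum_le_card_nsmul _ _ K fun i hi ↦ ?_).trans ?_
    · simpa [hY] using hi
    · rw [smul_eq_mul, mul_comm]
      gcongr
      exact card_le_univ _
  rw [sum_multiDegree, ← sum_filter_add_sum_filter_not univ (fun i ↦ φ i ∈ Y)]
  omega

lemma DegreesLE.sum_multiDegree_le (h : DegreesLE r D) (X : Finset α) :
    ∑ x ∈ X, multiDegree r φ x ≤ D * Fintype.card ι := by
  rw [sum_multiDegree, mul_comm]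
  exact sum_le_card_nsmul _ _ _ fun i _ ↦ h.2 (φ i) X

lemma DegreesLE.multiDegree_le (h : DegreesLE r D) (hφ : ∀ y, #{i | φ i = y} ≤ s) (x : α) :
    multiDegree r φ x ≤ D * s := by
  have hsub : ({i | r x (φ i)} : Finset ι) ⊆
      ({y ∈ univ.image φ | r x y} : Finset β).biUnion fun y ↦ {i | φ i = y} := fun i hi ↦ by
    simpa using hi
  calc multiDegree r φ x ≤ _ := card_le_card hsub
    _ ≤ #{y ∈ univ.image φ | r x y} * s := card_biUnion_le_card_mul _ _ _ fun y _ ↦ hφ y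
    _ ≤ D * s := by gcongr; exact h.1 x _

lemma IsSparse.mul_card_multiDegree_gt_le (h : IsSparse r K L) (hK : 0 < K)
    (hφ : ∀ y, #{i | φ i = y} ≤ s) (hs : Fintype.card ι < s * L) (X : Finset α) :
    s * #{x ∈ X | 2 * s * K < multiDegree r φ x} ≤ Fintype.card ι ∧
      #{x ∈ X | 2 * s * K < multiDegree r φ x} ≤ L := by
  set Z : Finset α := {x ∈ X | 2 * s * K < multiDegree r φ x}
  have hsub : ∀ W ⊆ Z, #W ≤ L → s * #W ≤ Fintype.card ι := fun W hW hWL ↦ by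
    have hlow : #W * (2 * s * K) ≤ ∑ x ∈ W, multiDegree r φ x :=
      card_nsmul_le_sum _ _ _ fun x hx ↦ (mem_filter.1 (hW hx)).2.le
    have hup := h.sum_multiDegree_le hφ hWL
    refine Nat.le_of_mul_le_mul_left ?_ hK
    linarith
  have hZL : #Z ≤ L := by
    by_contra! hL
    obtain ⟨W, hWZ, hWL⟩ := exists_subset_card_eq hL.le
    exact (hsub W hWZ hWL.le).not_gt (hWL ▸ hs)
  exact ⟨hsub Z subset_rfl hZL, hZL⟩

-- Split the sum at multidegree `2 * s * K`: above it, sparsity bounds the sum of the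
-- multidegrees and the maximum degree bounds each of them.
lemma IsSparse.sum_multiDegree_sq_le (h : IsSparse r K L) (hD : DegreesLE r D) (hK : 0 < K)
    (hφ : ∀ y, #{i | φ i = y} ≤ s) (hs : Fintype.card ι < s * L) (X : Finset α) :
    ∑ x ∈ X, multiDegree r φ x ^ 2 ≤ 4 * K * D * s * Fintype.card ι := by
  obtain ⟨hsZ, hZL⟩ := h.mul_card_multiDegree_gt_le hK hφ hs X
  have hhigh : ∑ x ∈ X with 2 * s * K < multiDegree r φ x, multiDegree r φ x ^ 2 ≤
      D * s * (2 * K * Fintype.card ι) := by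
    have hsum := h.sum_multiDegree_le hφ hZL
    calc ∑ x ∈ X with 2 * s * K < multiDegree r φ x, multiDegree r φ x ^ 2
        ≤ ∑ x ∈ X with 2 * s * K < multiDegree r φ x, D * s * multiDegree r φ x :=
          sum_le_sum fun x _ ↦ by rw [sq]; gcongr; exact hD.multiDegree_le hφ x
      _ = D * s * ∑ x ∈ X with 2 * s * K < multiDegree r φ x, multiDegree r φ x := by
          rw [mul_sum]
      _ ≤ D * s * (2 * K * Fintype.card ι) := by gcongr; nlinarith
  have hlow : ∑ x ∈ X with ¬ 2 * s * K < multiDegree r φ x, multiDegree r φ x ^ 2 ≤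
      2 * s * K * (D * Fintype.card ι) :=
    calc ∑ x ∈ X with ¬ 2 * s * K < multiDegree r φ x, multiDegree r φ x ^ 2
        ≤ ∑ x ∈ X with ¬ 2 * s * K < multiDegree r φ x, 2 * s * K * multiDegree r φ x :=
          sum_le_sum fun x hx ↦ by rw [sq]; gcongr; exact not_lt.1 (mem_filter.1 hx).2
      _ = 2 * s * K * ∑ x ∈ X with ¬ 2 * s * K < multiDegree r φ x, multiDegree r φ x := by
          rw [mul_sum]
      _ ≤ 2 * s * K * (D * Fintype.card ι) := by gcongr; exact hD.sum_multiDegree_le _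
  rw [← sum_filter_add_sum_filter_not X (fun x ↦ 2 * s * K < multiDegree r φ x)]
  linarith

end SparseRelation

section TwoBite
open Finset
open scoped Classical
variable {α β ι : Type*}

/-- The edges of the complete graph on `T`. -/
noncomputable def edgesWithin (T : Finset α) : Finset (Sym2 α) :=
  T.offDiag.image Sym2.mk.uncurry

lemma mk_mem_edgesWithin {T : Finset α} {a b : α} :
    s(a, b) ∈ edgesWithin T ↔ a ∈ T ∧ b ∈ T ∧ a ≠ b := by
  simp only [edgesWithin, mem_image, mem_offDiag, Prod.exists, Function.uncurry_apply_pair,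
    Sym2.eq_iff]
  grind

/-- The pairs of indices whose images under `φ` have no common neighbour in `H`: the pairs left
open for the second half of the two-bite construction. -/
def openGraph (H : SimpleGraph α) (φ : ι → α) : SimpleGraph ι where
  Adj i j := i ≠ j ∧ H.commonNeighbors (φ i) (φ j) = ∅
  symm := ⟨fun _ _ h ↦ ⟨h.1.symm, SimpleGraph.commonNeighbors_symm H .. ▸ h.2⟩⟩
  loopless := ⟨fun _ h ↦ h.1 rfl⟩

/-- The two-bite product of `G₁ ≤ H₁` and `G₂ ≤ H₂`: an edge of `G₁` between the first coordinates
(or of `G₂` between the second ones) is used unless the other coordinates have a common neighbour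
in the other `H`. -/
def twoBite (G₁ H₁ : SimpleGraph α) (G₂ H₂ : SimpleGraph β) : SimpleGraph (α × β) where
  Adj u w := G₁.Adj u.1 w.1 ∧ H₂.commonNeighbors u.2 w.2 = ∅ ∨
    G₂.Adj u.2 w.2 ∧ H₁.commonNeighbors u.1 w.1 = ∅
  symm := ⟨fun u w ↦ by
    simp only [SimpleGraph.adj_comm _ w.1, SimpleGraph.adj_comm _ w.2,
      SimpleGraph.commonNeighbors_symm _ w.1, SimpleGraph.commonNeighbors_symm _ w.2]
    exact id⟩
  loopless := ⟨fun u h ↦ by simp at h⟩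

variable {G₁ H₁ : SimpleGraph α} {G₂ H₂ : SimpleGraph β}

lemma twoBite_swap_adj {u w : α × β} :
    (twoBite G₂ H₂ G₁ H₁).Adj u.swap w.swap ↔ (twoBite G₁ H₁ G₂ H₂).Adj u w :=
  or_comm

-- Among the three edges of a triangle, two come from the same factor; they give the third edge a
-- common neighbour there, so that it comes from this factor as well.
lemma cliqueFree_twoBite (h₁ : G₁ ≤ H₁) (h₂ : G₂ ≤ H₂) (hG₁ : G₁.CliqueFree 3)
    (hG₂ : G₂.CliqueFree 3) : (twoBite G₁ H₁ G₂ H₂).CliqueFree 3 := by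
  have hno₁ : ∀ {a b c}, G₁.Adj a b → G₁.Adj a c → H₁.commonNeighbors b c ≠ ∅ :=
    fun hb hc ↦ Set.nonempty_iff_ne_empty.1 ⟨_, (h₁ hb).symm, (h₁ hc).symm⟩
  have hno₂ : ∀ {a b c}, G₂.Adj a b → G₂.Adj a c → H₂.commonNeighbors b c ≠ ∅ :=
    fun hb hc ↦ Set.nonempty_iff_ne_empty.1 ⟨_, (h₂ hb).symm, (h₂ hc).symm⟩
  intro T hT
  obtain ⟨u, v, w, huv, huw, hvw, -⟩ := SimpleGraph.is3Clique_iff.1 hT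
  rcases huv with ⟨uv, uv'⟩ | ⟨uv, uv'⟩ <;> rcases huw with ⟨uw, uw'⟩ | ⟨uw, uw'⟩ <;>
    rcases hvw with ⟨vw, vw'⟩ | ⟨vw, vw'⟩
  · exact hG₁ _ (SimpleGraph.is3Clique_triple_iff.2 ⟨uv, uw, vw⟩)
  · exact hno₁ uv uw vw'
  · exact hno₁ uv.symm vw uw'
  · exact hno₂ uw.symm vw.symm uv'
  · exact hno₁ uw.symm vw.symm uv'
  · exact hno₂ uv.symm vw uw'
  · exact hno₂ uv uw vw'
  · exact hG₂ _ (SimpleGraph.is3Clique_triple_iff.2 ⟨uv, uw, vw⟩)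

/-- For `l` pairs with distinct second coordinates and at most `s` of them with any given first
coordinate, at least `k` edges of `H₂` join second coordinates for which the first ones have no
common neighbour in `H₁`. -/
def Crossing (H₁ : SimpleGraph α) (H₂ : SimpleGraph β) (l s k : ℕ) : Prop :=
  ∀ (φ : Fin l → α) (ψ : Fin l → β), (∀ x, #{i | φ i = x} ≤ s) → ψ.Injective →
    k ≤ ((openGraph H₁ φ).map ψ ⊓ H₂).edgeSet.ncard

lemma Crossing.exists_twoBite_adj {l s k : ℕ} (h : Crossing H₁ H₂ l s k)
    (hG : ∀ (F : SimpleGraph β) (Q : Finset β), #Q = l → F.support ⊆ Q →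
      k ≤ (F ⊓ H₂).edgeSet.ncard → ∃ a b, F.Adj a b ∧ G₂.Adj a b)
    {I : Finset (α × β)} (hI : l ≤ #(I.image Prod.snd)) (hs : ∀ x, #{u ∈ I | u.1 = x} ≤ s) :
    ∃ u ∈ I, ∃ w ∈ I, (twoBite G₁ H₁ G₂ H₂).Adj u w := by
  obtain ⟨Q, hQI, hQ⟩ := exists_subset_card_eq hI
  set e : Fin l ≃ Q := (Q.equivFinOfCardEq hQ).symm
  choose u hu hsnd using fun i ↦ mem_image.1 (hQI (e i).2)
  have hψ : Function.Injective fun i ↦ (u i).2 := fun i j hij ↦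
    e.injective (Subtype.ext (by simpa only [hsnd] using hij))
  have hφ : ∀ x, #{i | (u i).1 = x} ≤ s := fun x ↦
    (card_le_card_of_injOn u (fun i hi ↦ by simpa [hu] using hi)
      (hψ.of_comp (f := Prod.snd)).injOn).trans (hs x)
  obtain ⟨a, b, ⟨-, i, j, hopen, rfl, rfl⟩, hadj⟩ := hG _ Q hQ (fun b ⟨c, hbc⟩ ↦ by
    obtain ⟨-, i, -, -, rfl, -⟩ := hbc
    simp [hsnd]) (h _ _ hφ hψ)
  exact ⟨u i, hu i, u j, hu j, .inr ⟨hadj, hopen.2⟩⟩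

variable [Fintype ι]

lemma card_filter_adj_eq_two_mul_ncard_edgeSet (G : SimpleGraph ι) :
    #{q : ι × ι | G.Adj q.1 q.2} = 2 * G.edgeSet.ncard := by
  rw [Set.ncard_eq_toFinset_card', Set.toFinset_card, ← SimpleGraph.edgeFinset_card,
    ← SimpleGraph.sum_degrees_eq_twice_card_edges, ← univ_product_univ, card_filter, sum_product]
  simp only [← card_filter]
  exact sum_congr rfl fun i _ ↦ by
    rw [← SimpleGraph.card_neighborFinset_eq_degree, SimpleGraph.neighborFinset_eq_filter]

lemma card_sq_le_ncard_edgeSet_openGraph [Fintype α] (H : SimpleGraph α) (φ : ι → α) :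
    Fintype.card ι ^ 2 ≤ 2 * (openGraph H φ).edgeSet.ncard +
      ∑ x, multiDegree H.Adj φ x ^ 2 + Fintype.card ι := by
  have hcover : (univ : Finset (ι × ι)) ⊆
      univ.filter (fun q : ι × ι ↦ (openGraph H φ).Adj q.1 q.2) ∪
        univ.biUnion (fun x ↦ univ.filter (fun i ↦ H.Adj x (φ i)) ×ˢ
          univ.filter (fun i ↦ H.Adj x (φ i))) ∪ univ.diag := by
    rintro ⟨i, j⟩ -
    by_cases hij : i = j
    · simp [hij]
    · rcases (H.commonNeighbors (φ i) (φ j)).eq_empty_or_nonempty with h | ⟨x, hi, hj⟩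
      · simp only [mem_union, mem_filter_univ]
        exact .inl (.inl ⟨hij, h⟩)
      · simp only [mem_union, mem_biUnion, mem_product, mem_filter_univ]
        exact .inl (.inr ⟨x, mem_univ x, hi.symm, hj.symm⟩)
  calc Fintype.card ι ^ 2 = #(univ : Finset (ι × ι)) := by
        rw [card_univ, Fintype.card_prod, sq]
    _ ≤ _ := card_le_card hcover
    _ ≤ #{q : ι × ι | (openGraph H φ).Adj q.1 q.2} + ∑ x, multiDegree H.Adj φ x ^ 2 +
          Fintype.card ι := by
        grw [card_union_le, card_union_le, card_biUnion_le, diag_card, card_univ]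
        simp only [card_product, multiDegree, sq, le_refl]
    _ = _ := by rw [card_filter_adj_eq_two_mul_ncard_edgeSet]

lemma IsSparse.sq_le_ncard_edgeSet_openGraph [Finite α] {H : SimpleGraph α} {φ : ι → α}
    {K L D s : ℕ} (h : IsSparse H.Adj K L) (hD : DegreesLE H.Adj D) (hK : 0 < K)
    (hφ : ∀ y, #{i | φ i = y} ≤ s) (hs : Fintype.card ι < s * L) (hι : 2 ≤ Fintype.card ι)
    (hbig : 8 * (4 * K * D * s) ≤ Fintype.card ι) :
    Fintype.card ι ^ 2 ≤ 8 * (openGraph H φ).edgeSet.ncard := by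
  have := Fintype.ofFinite α
  have hsum := h.sum_multiDegree_sq_le hD hK hφ hs univ
  have hcard := card_sq_le_ncard_edgeSet_openGraph H φ
  nlinarith

/-- Any family of edge-disjoint triangles of `H`, each with at least two vertices in a given set of
`l` vertices, has fewer than `τ` members. -/
def FewTriangles (H : SimpleGraph α) (l τ : ℕ) : Prop :=
  ∀ Q : Finset α, #Q = l → ∀ S : Finset (Finset α), (∀ T ∈ S, H.IsNClique 3 T) →
    (S : Set (Finset α)).Pairwise (fun T T' ↦ #(T ∩ T') ≤ 1) → (∀ T ∈ S, 2 ≤ #(T ∩ Q)) → #S < τ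

lemma exists_triangle_family [Finite α] (H : SimpleGraph α) :
    ∃ S : Finset (Finset α), (∀ T ∈ S, H.IsNClique 3 T) ∧
      (S : Set (Finset α)).Pairwise (fun T T' ↦ #(T ∩ T') ≤ 1) ∧
      (H.deleteEdges (S.biUnion edgesWithin)).CliqueFree 3 := by
  set P : Finset (Finset α) → Prop := fun S ↦ (∀ T ∈ S, H.IsNClique 3 T) ∧
    (S : Set (Finset α)).Pairwise (fun T T' ↦ #(T ∩ T') ≤ 1)
  obtain ⟨S, hS⟩ := Set.Finite.exists_maximal (s := {S | P S}) (Set.toFinite _)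
    ⟨∅, by simp [P]⟩
  refine ⟨S, hS.prop.1, hS.prop.2, fun T hT ↦ ?_⟩
  have hdisj : ∀ T' ∈ S, #(T ∩ T') ≤ 1 := fun T' hT' ↦ by
    refine card_le_one.2 fun a ha b hb ↦ by_contra fun hab ↦ ?_
    rw [mem_inter] at ha hb
    have hadj := hT.isClique ha.1 hb.1 hab
    rw [SimpleGraph.deleteEdges_adj, mem_coe, mem_biUnion] at hadj
    exact hadj.2 ⟨T', hT', mk_mem_edgesWithin.2 ⟨ha.2, hb.2, hab⟩⟩
  have hins : P (insert T S) := by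
    refine ⟨forall_mem_insert .. |>.2
      ⟨hT.mono (SimpleGraph.deleteEdges_le _), hS.prop.1⟩, ?_⟩
    rw [coe_insert, Set.pairwise_insert]
    exact ⟨hS.prop.2, fun T' hT' _ ↦ ⟨hdisj T' hT', inter_comm T T' ▸ hdisj T' hT'⟩⟩
  have hTS : T ∈ S := hS.le_of_ge hins (subset_insert T S) (mem_insert_self T S)
  have hone := hdisj T hTS
  rw [inter_self, hT.card_eq] at hone
  omega

-- Krivelevich's trick: delete the edges of a maximal family of edge-disjoint triangles.
lemma FewTriangles.exists_cliqueFree_le [Finite α] {H : SimpleGraph α} {l τ : ℕ}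
    (h : FewTriangles H l τ) :
    ∃ G ≤ H, G.CliqueFree 3 ∧ ∀ (F : SimpleGraph α) (Q : Finset α), #Q = l → F.support ⊆ Q →
      3 * τ ≤ (F ⊓ H).edgeSet.ncard → ∃ a b, F.Adj a b ∧ G.Adj a b := by
  obtain ⟨S, hclique, hdisj, hfree⟩ := exists_triangle_family H
  refine ⟨_, SimpleGraph.deleteEdges_le _, hfree, fun F Q hQ hF hcard ↦ ?_⟩
  by_contra! hno
  set S' : Finset (Finset α) := {T ∈ S | 2 ≤ #(T ∩ Q)}
  have hS' : #S' < τ := h Q hQ S' (fun T hT ↦ hclique T (mem_filter.1 hT).1)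
    (hdisj.mono (coe_subset.2 (filter_subset _ S))) fun T hT ↦ (mem_filter.1 hT).2
  have hcover : (F ⊓ H).edgeSet ⊆ S'.biUnion edgesWithin := by
    intro e
    induction e with | h a b => ?_
    rintro ⟨hFab, hHab⟩
    have hdel := hno a b hFab
    rw [SimpleGraph.deleteEdges_adj, not_and_not_right, mem_coe, mem_biUnion] at hdel
    obtain ⟨T, hT, he⟩ := hdel hHab
    obtain ⟨ha, hb, -⟩ := mk_mem_edgesWithin.1 he
    have hTQ : 1 < #(T ∩ Q) := one_lt_card.2 ⟨a, mem_inter.2 ⟨ha, hF ⟨b, hFab⟩⟩, b,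
      mem_inter.2 ⟨hb, hF ⟨a, hFab.symm⟩⟩, hHab.ne⟩
    exact mem_biUnion.2 ⟨T, mem_filter.2 ⟨hT, hTQ⟩, he⟩
  have hle := Set.ncard_le_ncard hcover (finite_toSet _)
  rw [Set.ncard_coe_finset] at hle
  have hthree : #(S'.biUnion edgesWithin) ≤ #S' * 3 :=
    card_biUnion_le_card_mul _ _ _ fun T hT ↦ by
      rw [edgesWithin, Sym2.card_image_offDiag, (hclique T (mem_filter.1 hT).1).card_eq]
      rfl
  omega

lemma exists_cliqueFree_of_crossing [Finite α] [Finite β] {l s τ K : ℕ}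
    (h₁ : FewTriangles H₁ l τ) (h₂ : FewTriangles H₂ l τ)
    (h₁₂ : Crossing H₁ H₂ l s (3 * τ)) (h₂₁ : Crossing H₂ H₁ l s (3 * τ)) {V : Set (α × β)}
    (hV : DegreesLE (fun x y ↦ (x, y) ∈ V) s) (hVS : IsSparse (fun x y ↦ (x, y) ∈ V) K l)
    (hl : 0 < l) :
    ∃ G : SimpleGraph (α × β), G.CliqueFree 3 ∧
      ∀ I : Finset (α × β), ↑I ⊆ V → K * l ≤ #I → ¬ G.IsIndepSet I := by
  obtain ⟨G₁, hGH₁, hG₁, hmeet₁⟩ := h₁.exists_cliqueFree_le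
  obtain ⟨G₂, hGH₂, hG₂, hmeet₂⟩ := h₂.exists_cliqueFree_le
  refine ⟨twoBite G₁ H₁ G₂ H₂, cliqueFree_twoBite hGH₁ hGH₂ hG₁ hG₂, fun I hIV hI hindep ↦ ?_⟩
  suffices ∃ u ∈ I, ∃ w ∈ I, (twoBite G₁ H₁ G₂ H₂).Adj u w by
    obtain ⟨u, hu, w, hw, huw⟩ := this
    exact hindep hu hw huw.ne huw
  have hrow : ∀ x, #{u ∈ I | u.1 = x} ≤ s := fun x ↦ by
    refine (card_le_card_of_injOn Prod.snd (fun u hu ↦ ?_) fun u hu w hw h ↦ ?_).trans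
      (hV.1 x (I.image Prod.snd))
    · obtain ⟨huI, rfl⟩ := mem_filter.1 (mem_coe.1 hu)
      exact mem_filter.2 ⟨mem_image_of_mem _ huI, hIV huI⟩
    · exact Prod.ext ((mem_filter.1 hu).2.trans (mem_filter.1 hw).2.symm) h
  have hcol : ∀ y, #{u ∈ I.image Prod.swap | u.1 = y} ≤ s := fun y ↦ by
    refine (card_le_card_of_injOn Prod.snd (fun u hu ↦ ?_) fun u hu w hw h ↦ ?_).trans
      (hV.2 y (I.image Prod.fst))
    · obtain ⟨huI, rfl⟩ := mem_filter.1 (mem_coe.1 hu)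
      obtain ⟨w, hw, rfl⟩ := mem_image.1 huI
      exact mem_filter.2 ⟨mem_image_of_mem _ hw, hIV hw⟩
    · exact Prod.ext ((mem_filter.1 hu).2.trans (mem_filter.1 hw).2.symm) h
  by_cases hsnd : l ≤ #(I.image Prod.snd)
  · exact h₁₂.exists_twoBite_adj hmeet₂ hsnd hrow
  · have hfst : l ≤ #(I.image Prod.fst) := by
      by_contra! hlt
      refine (hVS l hl le_rfl _ _ hlt.le (not_le.1 hsnd).le).not_ge (hI.trans (card_le_card ?_))
      exact fun u hu ↦ mem_filter.2
        ⟨mem_product.2 ⟨mem_image_of_mem _ hu, mem_image_of_mem _ hu⟩, hIV hu⟩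
    obtain ⟨u', hu, w', hw, huw⟩ := h₂₁.exists_twoBite_adj (G₁ := G₂) hmeet₁
      (I := I.image Prod.swap) (by simpa [image_image, Function.comp_def] using hfst) hcol
    obtain ⟨u, huI, rfl⟩ := mem_image.1 hu
    obtain ⟨w, hwI, rfl⟩ := mem_image.1 hw
    exact ⟨u, huI, w, hwI, twoBite_swap_adj.1 huw⟩

end TwoBite

section RandomRelation
open MeasureTheory ProbabilityTheory Finset unitInterval
open scoped Classical
variable {α β E : Type*} {p : I} {r r' : α → β → Prop} {K L D : ℕ}

lemma IsSparse.mono (h : IsSparse r K L) (hr : ∀ x y, r' x y → r x y) : IsSparse r' K L :=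
  fun n hn hnL X Y hX hY ↦ (card_le_card (monotone_filter_right _ fun _ _ ↦ hr _ _)).trans_lt
    (h n hn hnL X Y hX hY)

lemma DegreesLE.mono (h : DegreesLE r D) (hr : ∀ x y, r' x y → r x y) : DegreesLE r' D :=
  ⟨fun x Y ↦ (card_le_card (monotone_filter_right _ fun _ _ ↦ hr _ _)).trans (h.1 x Y),
    fun y X ↦ (card_le_card (monotone_filter_right _ fun _ _ ↦ hr _ _)).trans (h.2 y X)⟩

lemma exists_fin_map_subset_image {X : Finset α} (hX : X.Nonempty) {n : ℕ} (hn : #X ≤ n) :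
    ∃ φ : Fin n → α, X ⊆ univ.image φ := by
  have := hX.to_subtype
  obtain ⟨f⟩ : Nonempty (X ↪ Fin n) := Function.Embedding.nonempty_of_card_le (by simpa)
  exact ⟨fun i ↦ (Function.invFun f i : X), fun x hx ↦ mem_image.2
    ⟨f ⟨x, hx⟩, mem_univ _, by rw [Function.leftInverse_invFun f.injective]⟩⟩

variable [Fintype α] [Fintype β] {f : α → β → E} {c : ℕ}

lemma exists_le_card_of_not_isSparse {A : Set E} (hc : 0 < c)
    (hf : ∀ e, #{q : α × β | f q.1 q.2 = e} ≤ c)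
    (h : ¬ IsSparse (fun x y ↦ f x y ∈ A) (c * K) L) (hK : 0 < K) :
    ∃ n ∈ Ico 1 (L + 1), ∃ (φ : Fin n → α) (ψ : Fin n → β),
      K * n ≤ #{e ∈ univ.image (fun q : Fin n × Fin n ↦ f (φ q.1) (ψ q.2)) | e ∈ A} := by
  simp only [IsSparse, not_forall, not_lt] at h
  obtain ⟨n, hn, hnL, X, Y, hX, hY, hcard⟩ := h
  have hpos : 0 < #(Rel.interedges (fun x y ↦ f x y ∈ A) X Y) := hcard.trans_lt' (by positivity)
  obtain ⟨q, hq⟩ := card_pos.1 hpos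
  rw [Rel.mem_interedges_iff] at hq
  obtain ⟨φ, hφ⟩ := exists_fin_map_subset_image ⟨q.1, hq.1⟩ hX
  obtain ⟨ψ, hψ⟩ := exists_fin_map_subset_image ⟨q.2, hq.2.1⟩ hY
  refine ⟨n, mem_Ico.2 ⟨hn, Nat.lt_succ_of_le hnL⟩, φ, ψ, Nat.le_of_mul_le_mul_left ?_ hc⟩
  rw [← mul_assoc]
  refine hcard.trans (card_le_mul_card_image_of_maps_to (f := fun q ↦ f q.1 q.2) ?_ c fun e _ ↦
    (card_le_card (filter_subset_filter _ (subset_univ _))).trans (hf e))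
  rintro ⟨x, y⟩ hxy
  replace hxy := Rel.mem_interedges_iff.1 (mem_coe.1 hxy)
  obtain ⟨i, -, rfl⟩ := mem_image.1 (hφ hxy.1)
  obtain ⟨j, -, rfl⟩ := mem_image.1 (hψ hxy.2.1)
  exact mem_coe.2 (mem_filter.2 ⟨mem_image_of_mem _ (mem_univ (i, j)), hxy.2.2⟩)

lemma setBernoulli_real_ncard_lt_le [Fintype E] {N : ℕ} (h : 8 * (N : ℝ) ≤ p * Fintype.card E) :
    setBer((Set.univ : Set E), p).real {A | A.ncard < N} ≤ 1 / 4 := by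
  rcases N.eq_zero_or_pos with rfl | hN
  · simp
  have hcard : ∀ A : Set E, A.ncard = #{e ∈ univ | e ∈ A} := fun A ↦ by
    rw [Set.ncard_eq_toFinset_card']
    congr 1
    ext
    simp
  have hN' : (1 : ℝ) ≤ N := by exact_mod_cast hN
  have hexp : (2 : ℝ) ≤ Real.exp 1 := by linarith [Real.add_one_le_exp (1 : ℝ)]
  calc setBer((Set.univ : Set E), p).real {A | A.ncard < N}
      ≤ setBer((Set.univ : Set E), p).real {A | #{e ∈ univ | e ∈ A} ≤ N} :=
        measureReal_mono (fun A (hA : A.ncard < N) ↦ (hcard A ▸ hA).le) (measure_ne_top _ _)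
    _ ≤ 2 ^ N * Real.exp (-(p * #(univ : Finset E) / 2)) := setBernoulli_real_card_le p _ _
    _ ≤ Real.exp 1 ^ N * Real.exp (-(4 * N)) := by
        gcongr
        rw [card_univ]
        linarith
    _ = (Real.exp (3 * N))⁻¹ := by
        rw [← Real.exp_nat_mul, ← Real.exp_add, ← Real.exp_neg]
        ring_nf
    _ ≤ 4⁻¹ := by
        gcongr
        linarith [Real.add_one_le_exp (3 * N : ℝ)]
    _ = 1 / 4 := by norm_num

variable [Finite E]

lemma setBernoulli_real_not_isSparse_le (hc : 0 < c) (hf : ∀ e, #{q : α × β | f q.1 q.2 = e} ≤ c)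
    (hK : 3 ≤ K) (hδ : Fintype.card α * Fintype.card β * (L * p : ℝ) ^ K ≤ 1 / 2) :
    setBer((Set.univ : Set E), p).real {A | ¬ IsSparse (fun x y ↦ f x y ∈ A) (c * K) L} ≤
      2 * (Fintype.card α * Fintype.card β * (L * p : ℝ) ^ K) := by
  have hp : (0 : ℝ) ≤ p := p.2.1
  have hKr : (3 : ℝ) ≤ K := by exact_mod_cast hK
  have : (0 : ℝ) < K := by linarith
  set μ := setBer((Set.univ : Set E), p)
  let O (n : ℕ) (φ : (Fin n → α) × (Fin n → β)) : Finset E :=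
    univ.image fun q : Fin n × Fin n ↦ f (φ.1 q.1) (φ.2 q.2)
  have hterm : ∀ n ∈ Ico 1 (L + 1), ∀ φ : (Fin n → α) × (Fin n → β),
      μ.real {A | K * n ≤ #{e ∈ O n φ | e ∈ A}} ≤ (L * p : ℝ) ^ (K * n) := fun n hn φ ↦ by
    have hO : #(O n φ) ≤ n * n := card_image_le.trans (by simp)
    have hnL : (n : ℝ) ≤ L := by exact_mod_cast Nat.le_of_lt_succ (mem_Ico.1 hn).2
    have hn0 : (0 : ℝ) < n := by exact_mod_cast (mem_Ico.1 hn).1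
    refine (setBernoulli_real_le_card p _ _).trans (pow_le_pow_left₀ (by positivity) ?_ _)
    rw [div_le_iff₀ (by push_cast; positivity)]
    calc 3 * (#(O n φ) : ℝ) * p ≤ K * (n * n) * p := by gcongr; exact_mod_cast hO
      _ ≤ K * (L * n) * p := by gcongr
      _ = L * p * (K * n : ℕ) := by push_cast; ring
  calc μ.real {A | ¬ IsSparse (fun x y ↦ f x y ∈ A) (c * K) L}
      ≤ μ.real (⋃ n ∈ Ico 1 (L + 1), ⋃ φ ∈ univ, {A | K * n ≤ #{e ∈ O n φ | e ∈ A}}) := by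
        refine measureReal_mono (fun A hA ↦ ?_) (measure_ne_top _ _)
        obtain ⟨n, hn, φ, ψ, h⟩ := exists_le_card_of_not_isSparse hc hf hA (by lia)
        simp only [Set.mem_iUnion]
        exact ⟨n, hn, (φ, ψ), mem_univ _, h⟩
    _ ≤ ∑ n ∈ Ico 1 (L + 1), ∑ φ, μ.real {A | K * n ≤ #{e ∈ O n φ | e ∈ A}} :=
        (measureReal_biUnion_finset_le _ _).trans
          (sum_le_sum fun n _ ↦ measureReal_biUnion_finset_le _ _)
    _ ≤ ∑ n ∈ Ico 1 (L + 1), (Fintype.card α * Fintype.card β * (L * p : ℝ) ^ K) ^ n :=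
        sum_le_sum fun n hn ↦ (sum_le_card_nsmul _ _ _ fun φ _ ↦ hterm n hn φ).trans_eq <| by
          simp [mul_pow, pow_mul]
    _ ≤ (Fintype.card α * Fintype.card β * (L * p : ℝ) ^ K) ^ 1 /
          (1 - Fintype.card α * Fintype.card β * (L * p : ℝ) ^ K) :=
        geom_sum_Ico_le_of_lt_one (by positivity) (by linarith)
    _ ≤ _ := by
        have h₀ : 0 ≤ Fintype.card α * Fintype.card β * (L * p : ℝ) ^ K := by positivity
        rw [div_le_iff₀ (by linarith)]
        nlinarith

lemma exists_card_filter_gt_of_not_degreesLE (h : ¬ DegreesLE r D) :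
    (∃ x, D < #{y | r x y}) ∨ ∃ y, D < #{x | r x y} := by
  by_contra! hle
  exact h ⟨fun x Y ↦ (card_le_card (filter_subset_filter _ (subset_univ Y))).trans (hle.1 x),
    fun y X ↦ (card_le_card (filter_subset_filter _ (subset_univ X))).trans (hle.2 y)⟩

lemma setBernoulli_real_lt_card_filter_le {g : β → E} (hg : g.Injective)
    (hD : 6 * Fintype.card β * (p : ℝ) ≤ D + 1) :
    setBer((Set.univ : Set E), p).real {A | D < #{y | g y ∈ A}} ≤ (1 / 2) ^ (D + 1) := by
  have hcard : ∀ A : Set E, #{y | g y ∈ A} = #{e ∈ univ.image g | e ∈ A} := fun A ↦ by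
    rw [filter_image, card_image_of_injective _ hg]
  have hp : (0 : ℝ) ≤ p := p.2.1
  simp only [hcard, Nat.lt_iff_add_one_le]
  refine (setBernoulli_real_le_card p _ _).trans (pow_le_pow_left₀ (by positivity) ?_ _)
  rw [card_image_of_injective _ hg, card_univ, div_le_iff₀ (by positivity)]
  push_cast
  linarith

lemma setBernoulli_real_not_degreesLE_le (hf₁ : ∀ x, (f x).Injective)
    (hf₂ : ∀ y, Function.Injective fun x ↦ f x y) (hα : 6 * Fintype.card α * (p : ℝ) ≤ D + 1)
    (hβ : 6 * Fintype.card β * (p : ℝ) ≤ D + 1) :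
    setBer((Set.univ : Set E), p).real {A | ¬ DegreesLE (fun x y ↦ f x y ∈ A) D} ≤
      (Fintype.card α + Fintype.card β) * (1 / 2) ^ (D + 1) := by
  set μ := setBer((Set.univ : Set E), p)
  calc μ.real {A | ¬ DegreesLE (fun x y ↦ f x y ∈ A) D}
      ≤ μ.real ((⋃ x ∈ univ, {A | D < #{y | f x y ∈ A}}) ∪
          ⋃ y ∈ univ, {A | D < #{x | f x y ∈ A}}) :=
        measureReal_mono (fun A hA ↦ by
          simpa using exists_card_filter_gt_of_not_degreesLE hA) (measure_ne_top _ _)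
    _ ≤ ∑ x, μ.real {A | D < #{y | f x y ∈ A}} + ∑ y, μ.real {A | D < #{x | f x y ∈ A}} :=
        (measureReal_union_le _ _).trans
          (add_le_add (measureReal_biUnion_finset_le _ _) (measureReal_biUnion_finset_le _ _))
    _ ≤ ∑ _x : α, (1 / 2) ^ (D + 1) + ∑ _y : β, (1 / 2) ^ (D + 1) := by
        gcongr with x _ y _
        · exact setBernoulli_real_lt_card_filter_le (hf₁ x) hβ
        · exact setBernoulli_real_lt_card_filter_le (hf₂ y) hα
    _ = _ := by simp [add_mul]

end RandomRelation

section RandomGraph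
open MeasureTheory ProbabilityTheory Finset unitInterval SimpleGraph
open scoped Classical
variable {α β : Type*} {p : I} {l s k τ : ℕ}

lemma ncard_edgeSet_map {ι : Type*} (G : SimpleGraph ι) {ψ : ι → α} (hψ : ψ.Injective) :
    (G.map ψ).edgeSet.ncard = G.edgeSet.ncard := by
  rw [show (G.map ψ).edgeSet = _ from edgeSet_map ⟨ψ, hψ⟩ G]
  exact Set.ncard_image_of_injective _ (Sym2.map.injective hψ)

lemma card_filter_card_inter_le [Fintype α] (Q : Finset α) :
    #{T ∈ powersetCard 3 univ | 2 ≤ #(T ∩ Q)} ≤ #Q ^ 2 * Fintype.card α := by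
  have hsub : ({T ∈ powersetCard 3 univ | 2 ≤ #(T ∩ Q)} : Finset (Finset α)) ⊆
      ((Q ×ˢ Q) ×ˢ univ).image fun q ↦ {q.1.1, q.1.2, q.2} := fun T hT ↦ by
    obtain ⟨hT, hTQ⟩ := mem_filter.1 hT
    obtain ⟨a, ha, b, hb, hab⟩ := one_lt_card.1 hTQ
    rw [mem_inter] at ha hb
    have hsub : {a, b} ⊆ T := insert_subset ha.1 (singleton_subset_iff.2 hb.1)
    obtain ⟨c, hc⟩ : ∃ c, T \ {a, b} = {c} := card_eq_one.1 <| by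
      rw [card_sdiff_of_subset hsub, (mem_powersetCard.1 hT).2, card_pair hab]
    refine mem_image.2 ⟨((a, b), c), by simp [ha.2, hb.2], ?_⟩
    rw [← union_sdiff_of_subset hsub, hc, insert_union, singleton_union]
  refine (card_le_card hsub).trans (card_image_le.trans_eq ?_)
  rw [card_product, card_product, card_univ, sq]

lemma setBernoulli_real_biUnion_edgesWithin_subset [Finite α] {S : Finset (Finset α)}
    (hS : ∀ T ∈ S, #T = 3) (hdisj : (S : Set (Finset α)).Pairwise fun T T' ↦ #(T ∩ T') ≤ 1) :
    setBer((Set.univ : Set (Sym2 α)), p).real {A | ↑(S.biUnion edgesWithin) ⊆ A} =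
      ((p : ℝ) ^ 3) ^ #S := by
  have hedges : (S : Set (Finset α)).PairwiseDisjoint edgesWithin := fun T hT T' hT' hne ↦ by
    refine disjoint_left.2 fun e he he' ↦ ?_
    induction e with | h a b => ?_
    obtain ⟨ha, hb, hab⟩ := mk_mem_edgesWithin.1 he
    obtain ⟨ha', hb', -⟩ := mk_mem_edgesWithin.1 he'
    exact hab (card_le_one.1 (hdisj hT hT' hne) a (mem_inter.2 ⟨ha, ha'⟩) b
      (mem_inter.2 ⟨hb, hb'⟩))
  have hthree : ∀ T ∈ S, #(edgesWithin T) = 3 := fun T hT ↦ by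
    rw [edgesWithin, Sym2.card_image_offDiag, hS T hT]
    rfl
  rw [setBernoulli_real_superset, card_biUnion hedges, sum_congr rfl hthree, sum_const,
    smul_eq_mul, mul_comm, pow_mul]

lemma exists_subset_of_not_fewTriangles [Fintype α] {A : Set (Sym2 α)}
    (h : ¬ FewTriangles (fromEdgeSet A) l τ) :
    ∃ Q ∈ powersetCard l univ, ∃ S ∈ powersetCard τ {T ∈ powersetCard 3 univ | 2 ≤ #(T ∩ Q)},
      (S : Set (Finset α)).Pairwise (fun T T' ↦ #(T ∩ T') ≤ 1) ∧
        ((S.biUnion edgesWithin : Finset (Sym2 α)) : Set (Sym2 α)) ⊆ A := by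
  simp only [FewTriangles, not_forall, not_lt] at h
  obtain ⟨Q, hQ, S, hclique, hdisj, hSQ, hτ⟩ := h
  obtain ⟨S', hS', hS'τ⟩ := exists_subset_card_eq hτ
  refine ⟨Q, mem_powersetCard.2 ⟨subset_univ _, hQ⟩, S', mem_powersetCard.2 ⟨fun T hT ↦ ?_, hS'τ⟩,
    hdisj.mono (coe_subset.2 hS'), fun e he ↦ ?_⟩
  · exact mem_filter.2 ⟨mem_powersetCard.2 ⟨subset_univ _, (hclique T (hS' hT)).card_eq⟩,
      hSQ T (hS' hT)⟩
  · obtain ⟨T, hT, heT⟩ := mem_biUnion.1 he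
    induction e with | h a b => ?_
    obtain ⟨ha, hb, hab⟩ := mk_mem_edgesWithin.1 heT
    exact ((hclique T (hS' hT)).isClique ha hb hab).1

lemma setBernoulli_real_not_fewTriangles_le [Fintype α] :
    setBer((Set.univ : Set (Sym2 α)), p).real {A | ¬ FewTriangles (fromEdgeSet A) l τ} ≤
      (Fintype.card α : ℝ) ^ l * (3 * (l ^ 2 * Fintype.card α) * p ^ 3 / τ) ^ τ := by
  have hp : (0 : ℝ) ≤ p := p.2.1
  set μ := setBer((Set.univ : Set (Sym2 α)), p)
  let F (Q : Finset α) : Finset (Finset (Finset α)) :=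
    {S ∈ powersetCard τ {T ∈ powersetCard 3 univ | 2 ≤ #(T ∩ Q)} |
      (S : Set (Finset α)).Pairwise fun T T' ↦ #(T ∩ T') ≤ 1}
  have hF : ∀ Q ∈ powersetCard l (univ : Finset α), #(F Q) ≤ (l ^ 2 * Fintype.card α).choose τ :=
    fun Q hQ ↦ by
      grw [card_filter_le, card_powersetCard, card_filter_card_inter_le, (mem_powersetCard.1 hQ).2]
  have hterm : ∀ Q, ∀ S ∈ F Q, μ.real {A | ↑(S.biUnion edgesWithin) ⊆ A} = ((p : ℝ) ^ 3) ^ τ := by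
    intro Q S hS
    obtain ⟨hS, hdisj⟩ := mem_filter.1 hS
    obtain ⟨hS, hSτ⟩ := mem_powersetCard.1 hS
    rw [setBernoulli_real_biUnion_edgesWithin_subset
      (fun T hT ↦ (mem_powersetCard.1 (mem_filter.1 (hS hT)).1).2) hdisj, hSτ]
  calc μ.real {A | ¬ FewTriangles (fromEdgeSet A) l τ}
      ≤ μ.real (⋃ Q ∈ powersetCard l univ, ⋃ S ∈ F Q, {A | ↑(S.biUnion edgesWithin) ⊆ A}) := by
        refine measureReal_mono (fun A hA ↦ ?_) (measure_ne_top _ _)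
        obtain ⟨Q, hQ, S, hS, hdisj, hSA⟩ := exists_subset_of_not_fewTriangles hA
        simp only [Set.mem_iUnion]
        exact ⟨Q, hQ, S, mem_filter.2 ⟨hS, hdisj⟩, hSA⟩
    _ ≤ ∑ Q ∈ powersetCard l univ, ∑ S ∈ F Q, μ.real {A | ↑(S.biUnion edgesWithin) ⊆ A} :=
        (measureReal_biUnion_finset_le _ _).trans
          (sum_le_sum fun Q _ ↦ measureReal_biUnion_finset_le _ _)
    _ = ∑ Q ∈ powersetCard l (univ : Finset α), #(F Q) * ((p : ℝ) ^ 3) ^ τ :=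
        sum_congr rfl fun Q _ ↦ by rw [sum_congr rfl (hterm Q), sum_const, nsmul_eq_mul]
    _ ≤ ∑ Q ∈ powersetCard l (univ : Finset α),
          ((l ^ 2 * Fintype.card α).choose τ : ℝ) * ((p : ℝ) ^ 3) ^ τ := by
        gcongr with Q hQ
        exact hF Q hQ
    _ ≤ ∑ Q ∈ powersetCard l (univ : Finset α),
          (3 * (l ^ 2 * Fintype.card α : ℝ) * (p : ℝ) ^ 3 / τ) ^ τ := by
        gcongr
        rw [← Nat.cast_pow l, ← Nat.cast_mul (l ^ 2)]
        exact choose_mul_pow_le (l ^ 2 * Fintype.card α) τ (p := (p : ℝ) ^ 3) (by positivity)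
    _ ≤ _ := by
        rw [sum_const, nsmul_eq_mul, card_powersetCard, card_univ]
        gcongr
        exact_mod_cast Nat.choose_le_pow _ _

lemma setBernoulli_real_ncard_edgeSet_inf_lt_le [Finite α] (F : SimpleGraph α) (k : ℕ) :
    setBer((Set.univ : Set (Sym2 α)), p).real {A | (F ⊓ fromEdgeSet A).edgeSet.ncard < k} ≤
      2 ^ k * Real.exp (-(p * F.edgeSet.ncard / 2)) := by
  have := Fintype.ofFinite α
  have hcard : ∀ A, (F ⊓ fromEdgeSet A).edgeSet.ncard = #{e ∈ F.edgeFinset | e ∈ A} := fun A ↦ by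
    rw [← Set.ncard_coe_finset]
    congr 1
    ext e
    induction e with | h a b => ?_
    simp +contextual [F.ne_of_adj]
  have hF : F.edgeSet.ncard = #F.edgeFinset := by
    rw [← Set.ncard_coe_finset, coe_edgeFinset]
  simp only [hcard, hF]
  calc setBer((Set.univ : Set (Sym2 α)), p).real {A | #{e ∈ F.edgeFinset | e ∈ A} < k}
      ≤ setBer((Set.univ : Set (Sym2 α)), p).real {A | #{e ∈ F.edgeFinset | e ∈ A} ≤ k} :=
        measureReal_mono (fun A (hA : _ < k) ↦ hA.le) (measure_ne_top _ _)
    _ ≤ _ := setBernoulli_real_card_le p _ k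

lemma setBernoulli_real_not_crossing_le [Fintype α] [Fintype β] {H : SimpleGraph β}
    (hH : ∀ φ : Fin l → β, (∀ x, #{i | φ i = x} ≤ s) → l ^ 2 ≤ 8 * (openGraph H φ).edgeSet.ncard) :
    setBer((Set.univ : Set (Sym2 α)), p).real {A | ¬ Crossing H (fromEdgeSet A) l s k} ≤
      (Fintype.card β * Fintype.card α : ℝ) ^ l * (2 ^ k * Real.exp (-(p * l ^ 2 / 16))) := by
  have hp : (0 : ℝ) ≤ p := p.2.1
  set μ := setBer((Set.univ : Set (Sym2 α)), p)
  let F : Finset ((Fin l → β) × (Fin l → α)) :=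
    {q | (∀ x, #{i | q.1 i = x} ≤ s) ∧ q.2.Injective}
  have hterm : ∀ q ∈ F, μ.real {A | ((openGraph H q.1).map q.2 ⊓ fromEdgeSet A).edgeSet.ncard < k}
      ≤ 2 ^ k * Real.exp (-(p * l ^ 2 / 16)) := fun q hq ↦ by
    obtain ⟨hs, hinj⟩ := (mem_filter.1 hq).2
    have hopen : (l ^ 2 : ℝ) ≤ 8 * (openGraph H q.1).edgeSet.ncard := by exact_mod_cast hH q.1 hs
    refine (setBernoulli_real_ncard_edgeSet_inf_lt_le _ k).trans ?_
    rw [ncard_edgeSet_map _ hinj]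
    have := mul_le_mul_of_nonneg_left hopen hp
    gcongr 2 ^ k * ?_
    exact Real.exp_le_exp.2 (by linarith)
  calc μ.real {A | ¬ Crossing H (fromEdgeSet A) l s k}
      ≤ μ.real (⋃ q ∈ F, {A | ((openGraph H q.1).map q.2 ⊓ fromEdgeSet A).edgeSet.ncard < k}) := by
        refine measureReal_mono (fun A hA ↦ ?_) (measure_ne_top _ _)
        simp only [Crossing, Set.mem_ofPred_eq, not_forall, not_le] at hA
        obtain ⟨φ, ψ, hs, hinj, h⟩ := hA
        simp only [Set.mem_iUnion]
        exact ⟨(φ, ψ), mem_filter.2 ⟨mem_univ _, hs, hinj⟩, h⟩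
    _ ≤ ∑ q ∈ F, μ.real {A | ((openGraph H q.1).map q.2 ⊓ fromEdgeSet A).edgeSet.ncard < k} :=
        measureReal_biUnion_finset_le _ _
    _ ≤ #F * (2 ^ k * Real.exp (-(p * l ^ 2 / 16))) :=
        (sum_le_card_nsmul _ _ _ hterm).trans_eq (nsmul_eq_mul _ _)
    _ ≤ _ := by
        gcongr
        refine (Nat.cast_le.2 (card_le_univ F)).trans_eq ?_
        simp [mul_pow]

end RandomGraph

section Existence
open MeasureTheory ProbabilityTheory Finset unitInterval SimpleGraph
open scoped Classical
variable {α : Type*} [Fintype α] {p : I} {l s k τ K L D N : ℕ}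

lemma card_filter_sym2Mk_eq_le (e : Sym2 α) : #{q : α × α | s(q.1, q.2) = e} ≤ 2 := by
  induction e with | h a b => ?_
  calc #{q : α × α | s(q.1, q.2) = s(a, b)} ≤ #({(a, b), (b, a)} : Finset (α × α)) :=
        card_le_card fun q hq ↦ by simpa [Prod.ext_iff] using hq
    _ ≤ 2 := card_le_two

lemma setBernoulli_real_not_isSparse_fromEdgeSet_le (hK : 3 ≤ K)
    (hδ : Fintype.card α ^ 2 * (L * p : ℝ) ^ K ≤ 1 / 2) :
    setBer((Set.univ : Set (Sym2 α)), p).real {A | ¬ IsSparse (fromEdgeSet A).Adj (2 * K) L} ≤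
      2 * (Fintype.card α ^ 2 * (L * p : ℝ) ^ K) := by
  rw [sq] at hδ ⊢
  refine le_trans (measureReal_mono ?_ (measure_ne_top _ _))
    (setBernoulli_real_not_isSparse_le (f := Sym2.mk) two_pos
      (fun e ↦ by convert card_filter_sym2Mk_eq_le e) hK hδ)
  exact fun A hA hsparse ↦ hA <| hsparse.mono fun _ _ h ↦ h.1

lemma setBernoulli_real_not_degreesLE_fromEdgeSet_le (hD : 6 * Fintype.card α * (p : ℝ) ≤ D + 1) :
    setBer((Set.univ : Set (Sym2 α)), p).real {A | ¬ DegreesLE (fromEdgeSet A).Adj D} ≤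
      (2 * Fintype.card α) * (1 / 2) ^ (D + 1) := by
  rw [two_mul]
  refine le_trans (measureReal_mono ?_ (measure_ne_top _ _))
    (setBernoulli_real_not_degreesLE_le (f := Sym2.mk) (fun _ _ _ h ↦ Sym2.congr_right.1 h)
      (fun _ _ _ h ↦ Sym2.congr_left.1 h) hD hD)
  exact fun A hA hdeg ↦ hA <| hdeg.mono fun _ _ h ↦ h.1

/-- The typical properties of a random graph at density `p`: sparse up to scale `L`, of degree at
most `D`, and with fewer than `τ` triangles threatening any set of `l` vertices. -/
structure IsTypical (H : SimpleGraph α) (l τ K L D : ℕ) : Prop where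
  isSparse : IsSparse H.Adj K L
  degreesLE : DegreesLE H.Adj D
  fewTriangles : FewTriangles H l τ

lemma setBernoulli_real_not_isTypical_le (hK : 3 ≤ K)
    (hsparse : 40 * (Fintype.card α ^ 2 * (L * p : ℝ) ^ K) ≤ 1)
    (hD : 6 * Fintype.card α * (p : ℝ) ≤ D + 1) (hdeg : 40 * (Fintype.card α : ℝ) ≤ 2 ^ (D + 1))
    (htri : (Fintype.card α : ℝ) ^ l * (3 * (l ^ 2 * Fintype.card α) * p ^ 3 / τ) ^ τ ≤ 1 / 20) :
    setBer((Set.univ : Set (Sym2 α)), p).real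
      {A | ¬ IsTypical (fromEdgeSet A) l τ (2 * K) L D} ≤ 1 / 5 := by
  set μ := setBer((Set.univ : Set (Sym2 α)), p)
  have hdeg' : (2 * Fintype.card α : ℝ) * (1 / 2) ^ (D + 1) ≤ 1 / 20 := by
    rw [one_div_pow, mul_one_div, div_le_iff₀ (by positivity)]
    linarith
  calc μ.real {A | ¬ IsTypical (fromEdgeSet A) l τ (2 * K) L D}
      ≤ μ.real ({A | ¬ IsSparse (fromEdgeSet A).Adj (2 * K) L} ∪
          ({A | ¬ DegreesLE (fromEdgeSet A).Adj D} ∪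
            {A | ¬ FewTriangles (fromEdgeSet A) l τ})) := by
        refine measureReal_mono (fun A hA ↦ ?_) (measure_ne_top _ _)
        by_contra h
        simp only [Set.mem_union, Set.mem_ofPred_eq, not_or, not_not] at h
        exact hA ⟨h.1, h.2.1, h.2.2⟩
    _ ≤ 1 / 20 + (1 / 20 + 1 / 20) := by
        refine (measureReal_union_le _ _).trans (add_le_add ?_
          ((measureReal_union_le _ _).trans (add_le_add ?_ ?_)))
        · exact (setBernoulli_real_not_isSparse_fromEdgeSet_le hK (by linarith)).trans (by linarith)
        · exact (setBernoulli_real_not_degreesLE_fromEdgeSet_le hD).trans hdeg'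
        · exact setBernoulli_real_not_fewTriangles_le.trans htri
    _ ≤ 1 / 5 := by norm_num

lemma exists_fewTriangles_crossing (hK : 3 ≤ K)
    (hsparse : 40 * (Fintype.card α ^ 2 * (L * p : ℝ) ^ K) ≤ 1)
    (hD : 6 * Fintype.card α * (p : ℝ) ≤ D + 1) (hdeg : 40 * (Fintype.card α : ℝ) ≤ 2 ^ (D + 1))
    (htri : (Fintype.card α : ℝ) ^ l * (3 * (l ^ 2 * Fintype.card α) * p ^ 3 / τ) ^ τ ≤ 1 / 20)
    (hl : 2 ≤ l) (hs : l < s * L) (hbig : 8 * (4 * (2 * K) * D * s) ≤ l)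
    (hcross : ((Fintype.card α : ℝ) * Fintype.card α) ^ l *
      (2 ^ k * Real.exp (-(p * l ^ 2 / 16))) ≤ 1 / 5) :
    ∃ H₁ H₂ : SimpleGraph α, FewTriangles H₁ l τ ∧ FewTriangles H₂ l τ ∧
      Crossing H₁ H₂ l s k ∧ Crossing H₂ H₁ l s k := by
  have hopen : ∀ A : Set (Sym2 α), IsTypical (fromEdgeSet A) l τ (2 * K) L D →
      ∀ φ : Fin l → α, (∀ x, #{i | φ i = x} ≤ s) →
        l ^ 2 ≤ 8 * (openGraph (fromEdgeSet A) φ).edgeSet.ncard := fun A hA φ hφ ↦ by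
    simpa only [Fintype.card_fin] using hA.isSparse.sq_le_ncard_edgeSet_openGraph hA.degreesLE
      (by positivity) hφ (by simpa) (by simpa) (by simpa)
  obtain ⟨A, B, hA, hB, hAB, hBA⟩ := exists_pair_of_measureReal_not_lt
    (μ := setBer((Set.univ : Set (Sym2 α)), p))
    (G := fun A ↦ IsTypical (fromEdgeSet A) l τ (2 * K) L D)
    (X := fun A B ↦ Crossing (fromEdgeSet A) (fromEdgeSet B) l s k) (by norm_num)
    (setBernoulli_real_not_isTypical_le hK hsparse hD hdeg htri)
    (fun A hA ↦ (setBernoulli_real_not_crossing_le (hopen A hA)).trans hcross)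
  exact ⟨_, _, hA.fewTriangles, hB.fewTriangles, hAB, hBA⟩

lemma exists_isSparse_degreesLE_le_ncard (hK : 3 ≤ K)
    (hsparse : 40 * (Fintype.card α ^ 2 * (L * p : ℝ) ^ K) ≤ 1)
    (hD : 6 * Fintype.card α * (p : ℝ) ≤ D + 1) (hdeg : 40 * (Fintype.card α : ℝ) ≤ 2 ^ (D + 1))
    (hN : 8 * (N : ℝ) ≤ p * Fintype.card α ^ 2) :
    ∃ V : Set (α × α), IsSparse (fun x y ↦ (x, y) ∈ V) K L ∧
      DegreesLE (fun x y ↦ (x, y) ∈ V) D ∧ N ≤ V.ncard := by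
  set μ := setBer((Set.univ : Set (α × α)), p)
  have hδ : Fintype.card α * Fintype.card α * (L * p : ℝ) ^ K ≤ 1 / 40 := by
    rw [← sq]
    linarith
  have hsparse' : μ.real {V | ¬ IsSparse (fun x y ↦ (x, y) ∈ V) K L} ≤ 1 / 20 := by
    have h := setBernoulli_real_not_isSparse_le (f := Prod.mk (α := α) (β := α)) (p := p) (L := L)
      one_pos (fun e ↦ card_le_one.2 <| by simp) hK (hδ.trans (by norm_num))
    rw [one_mul] at h
    linarith
  have hdeg' : μ.real {V | ¬ DegreesLE (fun x y ↦ (x, y) ∈ V) D} ≤ 1 / 20 := by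
    refine (setBernoulli_real_not_degreesLE_le Prod.mk_right_injective Prod.mk_left_injective
      hD hD).trans ?_
    rw [one_div_pow, mul_one_div, div_le_iff₀ (by positivity)]
    linarith
  have hcard : μ.real {V | V.ncard < N} ≤ 1 / 4 :=
    setBernoulli_real_ncard_lt_le (by rwa [Fintype.card_prod, Nat.cast_mul, ← sq])
  refine exists_of_measureReal_not_lt_one (μ := μ) <|
    lt_of_le_of_lt (b := 1 / 20 + (1 / 20 + 1 / 4)) ?_ (by norm_num)
  calc μ.real {V | ¬ (IsSparse (fun x y ↦ (x, y) ∈ V) K L ∧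
          DegreesLE (fun x y ↦ (x, y) ∈ V) D ∧ N ≤ V.ncard)}
      ≤ μ.real ({V | ¬ IsSparse (fun x y ↦ (x, y) ∈ V) K L} ∪
          ({V | ¬ DegreesLE (fun x y ↦ (x, y) ∈ V) D} ∪ {V | V.ncard < N})) :=
        measureReal_mono (fun V hV ↦ by
          simpa only [Set.mem_union, Set.mem_ofPred_eq, not_and_or, not_le] using hV)
          (measure_ne_top _ _)
    _ ≤ _ := (measureReal_union_le _ _).trans (add_le_add hsparse'
        ((measureReal_union_le _ _).trans (add_le_add hdeg' hcard)))

end Existence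

section Parameters
open Finset unitInterval SimpleGraph Real

/-- The parameters of the construction: the two factors have `t ^ 7` vertices, `t ^ 8` vertices of
their product are kept, and `g` has the order of `t ^ 4 * √(log t)`, which is that of the
independence number of the resulting graph. -/
structure Admissible (t g : ℕ) : Prop where
  forty_le : 40 ≤ t
  one_le_log : 1 ≤ log t
  log_sq_le : (8000000 * log t) ^ 2 ≤ t
  pow_seven_le : 40 * (t : ℝ) ^ 7 ≤ 2 ^ t
  mul_log_le_sq : (t : ℝ) ^ 8 * log t ≤ (g : ℝ) ^ 2
  sq_le_mul_log : (g : ℝ) ^ 2 ≤ 4 * (t : ℝ) ^ 8 * log t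

/-- The bound `τ` on edge-disjoint triangles, one percent of the expected number `p * l ^ 2` of
ordered adjacent pairs among `l = 2000000 * g` vertices at density `p = g / t ^ 8`. -/
noncomputable def triangleBudget (t g : ℕ) : ℕ := ⌈40000000000 * ((g : ℝ) ^ 3 / t ^ 8)⌉₊

lemma le_triangleBudget (t g : ℕ) : 40000000000 * ((g : ℝ) ^ 3 / t ^ 8) ≤ triangleBudget t g :=
  Nat.le_ceil _

lemma six_mul_div_le (t g : ℕ) : 6 * (g : ℝ) / t ≤ (6 * g / t : ℕ) + 1 := by
  have := (Nat.lt_floor_add_one ((6 * g : ℕ) / (t : ℕ) : ℝ)).le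
  rwa [Nat.floor_div_eq_div, Nat.cast_mul, Nat.cast_ofNat] at this

namespace Admissible
variable {t g : ℕ} (h : Admissible t g)
include h

lemma forty_le_cast : (40 : ℝ) ≤ t := by exact_mod_cast h.forty_le

lemma cast_pos : (0 : ℝ) < t := by linarith [h.forty_le_cast]

lemma mul_log_le : 64000000000000 * log t ≤ t := by nlinarith [h.log_sq_le, h.one_le_log]

lemma log_div_sq_le : (8000000 * log t / t) ^ 2 ≤ 1 / t := by
  have := h.cast_pos
  rw [div_pow, div_le_div_iff₀ (by positivity) this]
  nlinarith [h.log_sq_le]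

lemma log_div_nonneg : 0 ≤ 8000000 * log t / t :=
  div_nonneg (by linarith [h.one_le_log]) h.cast_pos.le

lemma log_div_le_one : 8000000 * log t / t ≤ 1 := by
  rw [div_le_one h.cast_pos]
  linarith [h.mul_log_le, h.one_le_log]

lemma pow_four_le : (t : ℝ) ^ 4 ≤ g := by
  refine (sq_le_sq₀ (by positivity) (by positivity)).1 ?_
  calc ((t : ℝ) ^ 4) ^ 2 = t ^ 8 * 1 := by ring
    _ ≤ t ^ 8 * log t := by gcongr; exact h.one_le_log
    _ ≤ _ := h.mul_log_le_sq

lemma le_cast : (t : ℝ) ≤ g :=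
  (le_self_pow₀ (by linarith [h.forty_le_cast]) (by norm_num)).trans h.pow_four_le

lemma mul_le_pow_seven : 2000000 * (g : ℝ) ≤ t ^ 7 := by
  have hlog : 16000000000000 * log t ≤ (t : ℝ) ^ 6 := by
    calc 16000000000000 * log t ≤ t := by linarith [h.mul_log_le, h.one_le_log]
      _ ≤ (t : ℝ) ^ 6 := le_self_pow₀ (by linarith [h.forty_le_cast]) (by norm_num)
  refine (sq_le_sq₀ (by positivity) (by positivity)).1 ?_
  calc (2000000 * (g : ℝ)) ^ 2 = 4000000000000 * (g : ℝ) ^ 2 := by ring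
    _ ≤ 4000000000000 * (4 * (t : ℝ) ^ 8 * log t) := by gcongr; exact h.sq_le_mul_log
    _ = t ^ 8 * (16000000000000 * log t) := by ring
    _ ≤ t ^ 8 * t ^ 6 := by gcongr
    _ = (t ^ 7) ^ 2 := by ring

lemma sq_div_pow_le : (g : ℝ) ^ 2 / t ^ 9 ≤ 4 * log t / t := by
  have := h.cast_pos
  rw [div_le_div_iff₀ (by positivity) this]
  calc (g : ℝ) ^ 2 * t ≤ (4 * (t : ℝ) ^ 8 * log t) * t := by gcongr; exact h.sq_le_mul_log
    _ = _ := by ring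

lemma mul_pow_thirty_le {y : ℝ} (hy : y ^ 2 ≤ 1 / t) : 40 * (((t : ℝ) ^ 7) ^ 2 * y ^ 30) ≤ 1 := by
  have := h.cast_pos
  calc 40 * (((t : ℝ) ^ 7) ^ 2 * y ^ 30) = 40 * (((t : ℝ) ^ 7) ^ 2 * (y ^ 2) ^ 15) := by ring
    _ ≤ 40 * (((t : ℝ) ^ 7) ^ 2 * (1 / t) ^ 15) := by gcongr
    _ = 40 / (t : ℝ) := by field_simp
    _ ≤ 1 := (div_le_one this).2 h.forty_le_cast

lemma div_pow_eight_mem : (g : ℝ) / t ^ 8 ∈ I := by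
  have := h.cast_pos
  refine ⟨by positivity, (div_le_one (by positivity)).2 ?_⟩
  calc (g : ℝ) ≤ 2000000 * g := by linarith [h.cast_pos, h.le_cast]
    _ ≤ t ^ 7 := h.mul_le_pow_seven
    _ ≤ t ^ 8 := pow_le_pow_right₀ (by linarith [h.forty_le_cast]) (by norm_num)

lemma scale_mul_density_le :
    ((2000000 * g / (48 * t) + 1 : ℕ) : ℝ) * (g / t ^ 8) ≤ 8000000 * log t / t := by
  have ht := h.cast_pos
  have hscale : ((2000000 * g / (48 * t) + 1 : ℕ) : ℝ) ≤ 2000000 * (g / t) := by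
    have hdiv : ((2000000 * g / (48 * t) : ℕ) : ℝ) ≤ 2000000 / 48 * (g / t) := by
      refine Nat.cast_div_le.trans_eq ?_
      push_cast
      field_simp
    have hone : (1 : ℝ) ≤ g / t := (one_le_div ht).2 h.le_cast
    push_cast
    linarith
  calc ((2000000 * g / (48 * t) + 1 : ℕ) : ℝ) * (g / t ^ 8)
      ≤ 2000000 * (g / t) * (g / t ^ 8) := by gcongr
    _ = 2000000 * ((g : ℝ) ^ 2 / t ^ 9) := by field_simp
    _ ≤ 2000000 * (4 * log t / t) := by gcongr 2000000 * ?_; exact h.sq_div_pow_le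
    _ = _ := by ring

lemma pow_seven_le_of_le {d : ℕ} (hd : (t : ℝ) ≤ d) : 40 * (t : ℝ) ^ 7 ≤ 2 ^ d :=
  h.pow_seven_le.trans (pow_le_pow_right₀ one_le_two (by exact_mod_cast hd))

lemma pow_seven_le_degree : 40 * (t : ℝ) ^ 7 ≤ 2 ^ (6 * g / t + 1) := by
  have ht := h.cast_pos
  refine h.pow_seven_le_of_le ?_
  push_cast
  refine le_trans ?_ (six_mul_div_le t g)
  rw [le_div_iff₀ ht]
  calc (t : ℝ) * t = t ^ 2 := by ring
    _ ≤ t ^ 4 := pow_le_pow_right₀ (by linarith [h.forty_le_cast]) (by norm_num)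
    _ ≤ g := h.pow_four_le
    _ ≤ 6 * g := by linarith [h.le_cast]

lemma mul_log_le_cube_div : g * log t ≤ (g : ℝ) ^ 3 / t ^ 8 := by
  have := h.cast_pos
  rw [le_div_iff₀ (by positivity)]
  calc g * log t * t ^ 8 = g * (t ^ 8 * log t) := by ring
    _ ≤ g * (g : ℝ) ^ 2 := by gcongr; exact h.mul_log_le_sq
    _ = _ := by ring

lemma le_cube_div : (g : ℝ) ≤ g ^ 3 / t ^ 8 :=
  (le_mul_of_one_le_right (by positivity) h.one_le_log).trans h.mul_log_le_cube_div

lemma triangleBudget_le : (triangleBudget t g : ℝ) ≤ 50000000000 * (g ^ 3 / t ^ 8) := by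
  have := (Nat.ceil_lt_add_one (a := 40000000000 * ((g : ℝ) ^ 3 / t ^ 8)) (by positivity)).le
  exact this.trans (by linarith [h.le_cube_div, h.le_cast, h.forty_le_cast])

lemma mul_le_triangleBudget : 16 * (2000000 * g) ≤ triangleBudget t g := by
  have : (16 * (2000000 * g) : ℝ) ≤ triangleBudget t g :=
    (by linarith [h.le_cube_div, h.le_cast, h.cast_pos] : (16 * (2000000 * g) : ℝ) ≤ _).trans
      (le_triangleBudget t g)
  exact_mod_cast this

lemma triangle_base_le :
    3 * ((2000000 * (g : ℝ)) ^ 2 * t ^ 7) * (g / t ^ 8) ^ 3 / triangleBudget t g ≤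
      8000000 * log t / t := by
  have ht := h.cast_pos
  have hg : (0 : ℝ) < g := ht.trans_le h.le_cast
  have := zero_le_one.trans h.one_le_log
  calc 3 * ((2000000 * (g : ℝ)) ^ 2 * t ^ 7) * (g / t ^ 8) ^ 3 / triangleBudget t g
      ≤ 3 * ((2000000 * (g : ℝ)) ^ 2 * t ^ 7) * (g / t ^ 8) ^ 3 /
          (40000000000 * (g ^ 3 / t ^ 8)) := by gcongr; exact le_triangleBudget t g
    _ = 300 * ((g : ℝ) ^ 2 / t ^ 9) := by field_simp; norm_num
    _ ≤ 300 * (4 * log t / t) := by gcongr 300 * ?_; exact h.sq_div_pow_le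
    _ = 1200 * log t / t := by ring
    _ ≤ 8000000 * log t / t := by gcongr; norm_num

lemma triangle_bound :
    ((t : ℝ) ^ 7) ^ (2000000 * g) * (3 * ((2000000 * (g : ℝ)) ^ 2 * t ^ 7) * (g / t ^ 8) ^ 3 /
      triangleBudget t g) ^ triangleBudget t g ≤ 1 / 20 := by
  have ht := h.cast_pos
  set l := 2000000 * g
  calc ((t : ℝ) ^ 7) ^ l * (3 * ((2000000 * (g : ℝ)) ^ 2 * t ^ 7) * (g / t ^ 8) ^ 3 /
        triangleBudget t g) ^ triangleBudget t g
      ≤ ((t : ℝ) ^ 7) ^ l * (8000000 * log t / t) ^ triangleBudget t g := by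
        gcongr _ * ?_ ^ _
        exact h.triangle_base_le
    _ ≤ ((t : ℝ) ^ 7) ^ l * (8000000 * log t / t) ^ (16 * l) := by
        gcongr ?_ * ?_
        exact pow_le_pow_of_le_one h.log_div_nonneg h.log_div_le_one h.mul_le_triangleBudget
    _ = ((t : ℝ) ^ 7 * ((8000000 * log t / t) ^ 2) ^ 8) ^ l := by
        rw [mul_pow _ _ l, ← pow_mul _ 2, ← pow_mul _ (2 * 8)]
    _ ≤ ((t : ℝ) ^ 7 * (1 / t) ^ 8) ^ l := by gcongr; exact h.log_div_sq_le
    _ = (1 / (t : ℝ)) ^ l := by congr 1; field_simp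
    _ ≤ 1 / t := by
        refine pow_le_of_le_one (by positivity) ?_ ?_
        · exact (div_le_one ht).2 (by linarith [h.forty_le_cast])
        · have : (0 : ℝ) < g := ht.trans_le h.le_cast
          have : 0 < g := by exact_mod_cast this
          positivity
    _ ≤ 1 / 20 := one_div_le_one_div_of_le (by norm_num) (by linarith [h.forty_le_cast])

lemma crossing_bound :
    ((t : ℝ) ^ 7 * t ^ 7) ^ (2000000 * g) * (2 ^ (3 * triangleBudget t g) *
      exp (-(g / t ^ 8 * (2000000 * (g : ℝ)) ^ 2 / 16))) ≤ 1 / 5 := by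
  have ht := h.cast_pos
  have htwo : (2 : ℝ) ^ (3 * triangleBudget t g) ≤ exp (3 * triangleBudget t g) := by
    calc (2 : ℝ) ^ (3 * triangleBudget t g) ≤ exp 1 ^ (3 * triangleBudget t g) := by
          gcongr
          linarith [add_one_le_exp (1 : ℝ)]
      _ = _ := by rw [exp_one_pow]; push_cast; rfl
  have hpow : ((t : ℝ) ^ 7 * t ^ 7) ^ (2000000 * g) = exp (28000000 * (g * log t)) := by
    rw [← pow_add, ← pow_mul, ← exp_log (pow_pos ht _), log_pow]
    push_cast
    ring_nf
  calc ((t : ℝ) ^ 7 * t ^ 7) ^ (2000000 * g) * (2 ^ (3 * triangleBudget t g) *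
        exp (-(g / t ^ 8 * (2000000 * (g : ℝ)) ^ 2 / 16)))
      ≤ exp (28000000 * (g * log t)) * (exp (3 * triangleBudget t g) *
          exp (-(g / t ^ 8 * (2000000 * (g : ℝ)) ^ 2 / 16))) := by rw [hpow]; gcongr
    _ = exp (28000000 * (g * log t) + 3 * triangleBudget t g -
          250000000000 * (g ^ 3 / t ^ 8)) := by
        rw [← exp_add, ← exp_add]
        ring_nf
    _ ≤ exp (-5) := exp_le_exp.2 <| by
        linarith [h.mul_log_le_cube_div, h.triangleBudget_le, h.le_cube_div, h.le_cast,
          h.forty_le_cast]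
    _ ≤ 1 / 5 := by
        rw [exp_neg, one_div]
        exact inv_anti₀ (by norm_num) (by linarith [add_one_le_exp (5 : ℝ)])

lemma exists_factors : ∃ H₁ H₂ : SimpleGraph (Fin (t ^ 7)),
    FewTriangles H₁ (2000000 * g) (triangleBudget t g) ∧
    FewTriangles H₂ (2000000 * g) (triangleBudget t g) ∧
    Crossing H₁ H₂ (2000000 * g) (48 * t) (3 * triangleBudget t g) ∧
    Crossing H₂ H₁ (2000000 * g) (48 * t) (3 * triangleBudget t g) := by
  have ht := h.cast_pos
  have htg : t ≤ g := by exact_mod_cast h.le_cast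
  have hforty := h.forty_le
  have hdegree : 6 * g / t * t ≤ 6 * g := Nat.div_mul_le_self _ _
  refine exists_fewTriangles_crossing (p := ⟨g / t ^ 8, h.div_pow_eight_mem⟩) (K := 30)
    (L := 2000000 * g / (48 * t) + 1) (D := 6 * g / t) (by norm_num) ?_ ?_ ?_ ?_ (by omega)
    (Nat.lt_mul_div_succ _ (by omega)) ?_ ?_
  any_goals simp only [Fintype.card_fin, Nat.cast_pow, Nat.cast_mul, Nat.cast_ofNat]
  · exact h.mul_pow_thirty_le (le_trans (pow_le_pow_left₀ (by positivity) h.scale_mul_density_le _)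
      h.log_div_sq_le)
  · exact le_trans (by field_simp; rfl) (six_mul_div_le t g)
  · exact h.pow_seven_le_degree
  · exact h.triangle_bound
  · nlinarith
  · exact h.crossing_bound

lemma exists_vertexSet : ∃ V : Set (Fin (t ^ 7) × Fin (t ^ 7)),
    IsSparse (fun x y ↦ (x, y) ∈ V) 30 (2000000 * g) ∧
      DegreesLE (fun x y ↦ (x, y) ∈ V) (48 * t) ∧ t ^ 8 ≤ V.ncard := by
  have ht := h.cast_pos
  have hforty := h.forty_le_cast
  have hmem : 8 / (t : ℝ) ^ 6 ∈ I :=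
    ⟨by positivity, (div_le_one (by positivity)).2 <|
      (by linarith : (8 : ℝ) ≤ t).trans (le_self_pow₀ (by linarith) (by norm_num))⟩
  refine exists_isSparse_degreesLE_le_ncard (p := ⟨_, hmem⟩) (by norm_num) ?_ ?_ ?_ ?_
  any_goals simp only [Fintype.card_fin, Nat.cast_pow]
  · refine h.mul_pow_thirty_le ?_
    have hlog : 1024000000000000 * log t ≤ (t : ℝ) ^ 2 := by nlinarith [h.mul_log_le]
    calc (((2000000 * g : ℕ) : ℝ) * (8 / t ^ 6)) ^ 2
        = 256000000000000 / t ^ 3 * ((g : ℝ) ^ 2 / t ^ 9) := by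
          push_cast
          field_simp
          ring
      _ ≤ 256000000000000 / t ^ 3 * (4 * log t / t) := by
          gcongr _ * ?_
          exact h.sq_div_pow_le
      _ = 1024000000000000 * log t / t ^ 4 := by field_simp; ring
      _ ≤ t ^ 2 / t ^ 4 := by gcongr
      _ = 1 / t * (1 / t) := by field_simp
      _ ≤ 1 / t := mul_le_of_le_one_right (by positivity)
          ((div_le_one ht).2 (by linarith))
  · push_cast
    calc 6 * (t : ℝ) ^ 7 * (8 / t ^ 6) = 48 * t := by field_simp; norm_num
      _ ≤ _ := by linarith
  · refine h.pow_seven_le_of_le ?_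
    push_cast
    linarith
  · refine le_of_eq ?_
    field_simp

end Admissible

theorem Admissible.exists_cliqueFree {t g : ℕ} (h : Admissible t g) :
    ∃ (G : SimpleGraph (Fin (t ^ 7) × Fin (t ^ 7))) (V : Set (Fin (t ^ 7) × Fin (t ^ 7))),
      G.CliqueFree 3 ∧ t ^ 8 ≤ V.ncard ∧
        ∀ S : Finset (Fin (t ^ 7) × Fin (t ^ 7)), ↑S ⊆ V → 60000000 * g ≤ #S →
          ¬ G.IsIndepSet S := by
  have hg : 0 < g := by
    have := h.forty_le_cast.trans h.le_cast
    exact_mod_cast this.trans_lt' (by norm_num : (0 : ℝ) < 40)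
  obtain ⟨H₁, H₂, h₁, h₂, h₁₂, h₂₁⟩ := h.exists_factors
  obtain ⟨V, hsparse, hdeg, hcard⟩ := h.exists_vertexSet
  obtain ⟨G, hG, hindep⟩ :=
    exists_cliqueFree_of_crossing h₁ h₂ h₁₂ h₂₁ hdeg hsparse (by positivity)
  exact ⟨G, V, hG, hcard, fun S hS hSg ↦ hindep S hS (by omega)⟩

end Parameters

section SmallIndependenceNumber
open Finset SimpleGraph Real Filter

lemma eventually_mul_log_sq_le {C : ℝ} (hC : 0 < C) :
    ∀ᶠ x : ℝ in atTop, (C * log x) ^ 2 ≤ x := by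
  have hlittle := (isLittleO_log_rpow_atTop (r := 1 / 2) (by norm_num)).bound (inv_pos.2 hC)
  filter_upwards [hlittle, eventually_ge_atTop 1] with x hx hx1
  rw [norm_of_nonneg (log_nonneg hx1), norm_of_nonneg (by positivity), ← sqrt_eq_rpow,
    inv_mul_eq_div, le_div_iff₀' hC] at hx
  exact (le_sqrt (mul_nonneg hC.le (log_nonneg hx1)) (by positivity)).1 hx

lemma eventually_admissible :
    ∀ᶠ t : ℕ in atTop, Admissible t ⌈(t : ℝ) ^ 4 * √(log t)⌉₊ := by
  have hlog : ∀ᶠ t : ℕ in atTop, 1 ≤ log t :=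
    (tendsto_log_atTop.comp tendsto_natCast_atTop_atTop).eventually_ge_atTop 1
  have hpow : ∀ᶠ t : ℕ in atTop, 40 * (t : ℝ) ^ 7 ≤ 2 ^ t := by
    filter_upwards [(isLittleO_pow_const_const_pow_of_one_lt (R := ℝ) 7 (r := 2)
      (by norm_num)).bound (c := 1 / 40) (by norm_num)] with t ht
    rw [norm_of_nonneg (by positivity), norm_of_nonneg (by positivity)] at ht
    linarith
  filter_upwards [eventually_ge_atTop 40, hlog, hpow, tendsto_natCast_atTop_atTop.eventually
    (eventually_mul_log_sq_le (C := 8000000) (by norm_num))] with t ht ht1 htpow htlog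
  set a : ℝ := (t : ℝ) ^ 4 * √(log t) with ha
  have ha1 : 1 ≤ a := one_le_mul_of_one_le_of_one_le
    (one_le_pow₀ (by exact_mod_cast (by omega : 1 ≤ t))) (one_le_sqrt.2 ht1)
  have hsq : a ^ 2 = (t : ℝ) ^ 8 * log t := by
    rw [ha, mul_pow, sq_sqrt (by linarith)]
    ring
  have hceil : (⌈a⌉₊ : ℝ) ≤ 2 * a := Nat.ceil_le_two_mul (by linarith)
  refine ⟨ht, ht1, htlog, htpow, ?_, ?_⟩
  · rw [← hsq]
    gcongr
    exact Nat.le_ceil a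
  · calc (⌈a⌉₊ : ℝ) ^ 2 ≤ (2 * a) ^ 2 := by gcongr
      _ = 4 * a ^ 2 := by ring
      _ = _ := by rw [hsq, mul_assoc]

lemma eventually_exists_admissible : ∀ᶠ n : ℕ in atTop, ∃ t g : ℕ,
    Admissible t g ∧ n ≤ t ^ 8 ∧ (g : ℝ) ≤ 32 * √(n * log n) := by
  have hroot : Tendsto (fun n : ℕ ↦ ⌈(n : ℝ) ^ (1 / 8 : ℝ)⌉₊) atTop atTop :=
    tendsto_nat_ceil_atTop.comp
      ((tendsto_rpow_atTop (by norm_num)).comp tendsto_natCast_atTop_atTop)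
  filter_upwards [hroot.eventually eventually_admissible, eventually_ge_atTop 1] with n hadm hn
  set y : ℝ := (n : ℝ) ^ (1 / 8 : ℝ) with hy
  set t := ⌈y⌉₊
  have hn1 : (1 : ℝ) ≤ n := by exact_mod_cast hn
  have hyn : y ^ 8 = n := by
    rw [hy, ← rpow_natCast, ← rpow_mul (by positivity)]
    norm_num
  have hty : (t : ℝ) ≤ 2 * y := by
    linarith [Nat.ceil_lt_add_one (by positivity : 0 ≤ y),
      one_le_rpow hn1 (by norm_num : 0 ≤ (1 / 8 : ℝ))]
  have htn : t ≤ n := Nat.ceil_le.2 <|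
    (rpow_le_rpow_of_exponent_le hn1 (by norm_num)).trans_eq (rpow_one _)
  refine ⟨t, _, hadm, ?_, ?_⟩
  · have : (n : ℝ) ≤ (t : ℝ) ^ 8 := by
      rw [← hyn]
      gcongr
      exact Nat.le_ceil y
    exact_mod_cast this
  · set a : ℝ := (t : ℝ) ^ 4 * √(log t) with ha
    have ha1 : 1 ≤ a := one_le_mul_of_one_le_of_one_le
      (one_le_pow₀ (by linarith [hadm.forty_le_cast])) (one_le_sqrt.2 hadm.one_le_log)
    calc (⌈a⌉₊ : ℝ) ≤ 2 * a := Nat.ceil_le_two_mul (by linarith)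
      _ ≤ 2 * ((2 * y) ^ 4 * √(log n)) := by
          have := hadm.cast_pos
          rw [ha]
          gcongr
      _ = 32 * (√(y ^ 8) * √(log n)) := by
          rw [show y ^ 8 = (y ^ 4) ^ 2 by ring, sqrt_sq (by positivity)]
          ring
      _ = 32 * √(n * log n) := by rw [hyn, sqrt_mul (by positivity)]

theorem eventually_exists_cliqueFree_indepNum_le : ∀ᶠ n : ℕ in atTop, ∃ G : SimpleGraph (Fin n),
    G.CliqueFree 3 ∧ (G.indepNum : ℝ) ≤ 60000000 * (32 * √(n * log n)) := by
  filter_upwards [eventually_exists_admissible] with n ⟨t, g, hadm, hnt, hg⟩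
  obtain ⟨G, V, hG, hV, hindep⟩ := hadm.exists_cliqueFree
  classical
  obtain ⟨f⟩ : Nonempty (Fin n ↪ V) := Function.Embedding.nonempty_of_card_le <| by
    rw [Fintype.card_fin, ← Nat.card_eq_fintype_card, Nat.card_coe_set_eq]
    exact hnt.trans hV
  let F := f.trans (.subtype _)
  refine ⟨G.comap F, hG.comap ⟨(Embedding.comap F G).toCopy⟩, ?_⟩
  obtain ⟨S, hS⟩ := (G.comap F).exists_isNIndepSet_indepNum
  have hlt : #(S.map F) < 60000000 * g := by
    by_contra! hle
    refine hindep (S.map F) (fun x hx ↦ ?_) hle ?_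
    · obtain ⟨i, -, rfl⟩ := mem_map.1 hx
      exact (f i).2
    rw [coe_map]
    rintro _ ⟨i, hi, rfl⟩ _ ⟨j, hj, rfl⟩ hij
    exact hS.isIndepSet hi hj (ne_of_apply_ne _ hij)
  rw [card_map, hS.card_eq] at hlt
  calc ((G.comap F).indepNum : ℝ) ≤ 60000000 * g := by exact_mod_cast hlt.le
    _ ≤ _ := by gcongr

end SmallIndependenceNumber

section TriangleFreeLowerBound
open Finset SimpleGraph Real
open scoped Classical

variable {V : Type*} [Fintype V] {G : SimpleGraph V} {v : V} {T : Finset V}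

lemma two_mul_sum_card_powerset {α : Type*} (A : Finset α) :
    2 * ∑ B ∈ A.powerset, #B = #A * 2 ^ #A := by
  have hcompl : ∑ B ∈ A.powerset, #B = ∑ B ∈ A.powerset, #(A \ B) := by
    refine sum_nbij' (A \ ·) (A \ ·) ?_ ?_ ?_ ?_ ?_ <;> intro B hB <;>
      simp [inter_eq_right.2 (mem_powerset.1 hB)]
  calc 2 * ∑ B ∈ A.powerset, #B = ∑ B ∈ A.powerset, (#(A \ B) + #B) := by
        rw [sum_add_distrib, ← hcompl, two_mul]
    _ = ∑ _B ∈ A.powerset, #A :=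
        sum_congr rfl fun B hB ↦ card_sdiff_add_card_eq_card (mem_powerset.1 hB)
    _ = #A * 2 ^ #A := by rw [sum_const, card_powerset, smul_eq_mul, mul_comm]

lemma logb_two_le_four_mul_sqrt {d : ℝ} (hd : 0 < d) : logb 2 d ≤ 4 * √d := by
  have hlog : log d = 2 * log √d := by rw [log_sqrt hd.le]; ring
  rw [logb, hlog, div_le_iff₀ (log_pos one_lt_two)]
  nlinarith [log_two_gt_d9, log_le_sub_one_of_pos (sqrt_pos.2 hd), sqrt_pos.2 hd]

lemma logb_div_mul_two_pow_add_one_le {d : ℝ} (hd : 1 ≤ d) (x : ℕ) :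
    logb 2 d / 8 * (2 ^ x + 1) ≤ d + x * 2 ^ x / 2 := by
  have hpow : (1 : ℝ) ≤ 2 ^ x := one_le_pow₀ one_le_two
  rcases le_or_gt (logb 2 d) (2 * x) with hx | hx
  · calc logb 2 d / 8 * (2 ^ x + 1) ≤ 2 * x / 8 * (2 ^ x + 2 ^ x) := by gcongr
      _ = x * 2 ^ x / 2 := by ring
      _ ≤ d + x * 2 ^ x / 2 := by linarith
  · have hsq : (2 : ℝ) ^ x ≤ √d := by
      refine le_sqrt_of_sq_le ?_
      rw [← pow_mul, ← rpow_natCast, ← le_logb_iff_rpow_le one_lt_two (by linarith)]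
      push_cast
      linarith
    calc logb 2 d / 8 * (2 ^ x + 1) ≤ 4 * √d / 8 * (√d + √d) := by
          gcongr
          · exact logb_two_le_four_mul_sqrt (by linarith)
          · exact one_le_sqrt.2 hd
      _ = d := by rw [← mul_self_sqrt (by linarith : 0 ≤ d)]; simp; ring
      _ ≤ d + x * 2 ^ x / 2 := le_add_of_nonneg_right (by positivity)

/-- The neighbours of `v` that have no neighbour in `T`; when `G` is triangle-free, any set of them
may be added to an independent set `T`. -/
noncomputable def freeNeighbors (G : SimpleGraph V) (v : V) (T : Finset V) : Finset V :=
  {a ∈ G.neighborFinset v | ∀ x ∈ T, ¬ G.Adj a x}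

/-- The independent sets whose trace outside the closed neighbourhood of `v` is `T`. -/
noncomputable def indepFibre (G : SimpleGraph V) (v : V) (T : Finset V) : Finset (Finset V) :=
  {W | G.IsIndepSet W ∧ W \ insert v (G.neighborFinset v) = T}

lemma mem_freeNeighbors {a : V} :
    a ∈ freeNeighbors G v T ↔ G.Adj v a ∧ ∀ x ∈ T, ¬ G.Adj a x := by
  simp [freeNeighbors]

lemma mem_indepFibre {W : Finset V} :
    W ∈ indepFibre G v T ↔ G.IsIndepSet W ∧ W \ insert v (G.neighborFinset v) = T := by
  simp [indepFibre]

lemma indepFibre_eq (hG : G.CliqueFree 3) (hT : G.IsIndepSet T)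
    (hdisj : Disjoint T (insert v (G.neighborFinset v))) :
    indepFibre G v T = insert (insert v T) ((freeNeighbors G v T).powerset.image (T ∪ ·)) := by
  have hN := isIndepSet_neighborSet_of_triangleFree G hG v
  simp only [IsIndepSet, Set.Pairwise, mem_neighborSet, SetLike.mem_coe] at hT hN
  simp only [Finset.disjoint_left, mem_insert, mem_neighborFinset] at hdisj
  ext W
  simp only [mem_indepFibre, mem_insert, mem_image, mem_powerset, IsIndepSet, Set.Pairwise,
    SetLike.mem_coe]
  constructor
  · rintro ⟨hW, rfl⟩
    by_cases hvW : v ∈ W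
    · left
      grind [mem_neighborFinset]
    · refine .inr ⟨W ∩ G.neighborFinset v, ?_, ?_⟩ <;>
        grind [mem_neighborFinset, mem_freeNeighbors]
  · rintro (rfl | ⟨B, hB, rfl⟩)
    · constructor <;> grind [G.adj_comm, mem_neighborFinset]
    · constructor <;> grind [G.adj_comm, mem_neighborFinset, mem_freeNeighbors]

lemma sum_indepFibre {M : Type*} [AddCommMonoid M] (f : Finset V → M) (hG : G.CliqueFree 3)
    (hT : G.IsIndepSet T) (hdisj : Disjoint T (insert v (G.neighborFinset v))) :
    ∑ W ∈ indepFibre G v T, f W =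
      f (insert v T) + ∑ B ∈ (freeNeighbors G v T).powerset, f (T ∪ B) := by
  have hfree : Disjoint T (freeNeighbors G v T) :=
    hdisj.mono_right ((filter_subset _ _).trans (subset_insert _ _))
  have hv : v ∉ T := Finset.disjoint_right.1 hdisj (mem_insert_self _ _)
  have hv' : v ∉ freeNeighbors G v T := by simp [mem_freeNeighbors]
  rw [indepFibre_eq hG hT hdisj, sum_insert, sum_image]
  · intro B hB C hC hBC
    rw [mem_coe, mem_powerset] at hB hC
    rw [← union_sdiff_cancel_left (hfree.mono_right hB), ← union_sdiff_cancel_left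
      (hfree.mono_right hC)]
    exact congr_arg (· \ T) hBC
  · rw [mem_image]
    rintro ⟨B, hB, hTB⟩
    have : v ∈ T ∪ B := hTB ▸ mem_insert_self _ _
    grind

/-- The weight counting `d` for `v ∈ W` and `1` for each neighbour of `v` in `W`; when all degrees
are at most `d`, its sum over `v` is at most `2 * d * #W`. -/
noncomputable def localWeight (G : SimpleGraph V) (d : ℝ) (W : Finset V) (v : V) : ℝ :=
  (if v ∈ W then d else 0) + #(G.neighborFinset v ∩ W)

lemma localWeight_insert_self (d : ℝ) : d ≤ localWeight G d (insert v T) v := by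
  simp [localWeight]

lemma localWeight_union {B : Finset V} (d : ℝ)
    (hdisj : Disjoint T (insert v (G.neighborFinset v))) (hB : B ⊆ freeNeighbors G v T) :
    localWeight G d (T ∪ B) v = #B := by
  have hBN : B ⊆ G.neighborFinset v := hB.trans (filter_subset _ _)
  have hv : v ∉ T ∪ B := by
    rw [mem_union, not_or]
    exact ⟨Finset.disjoint_right.1 hdisj (mem_insert_self _ _), fun h ↦ by simpa using hBN h⟩
  have hinter : G.neighborFinset v ∩ (T ∪ B) = B := by
    have hTN : G.neighborFinset v ∩ T = ∅ :=
      disjoint_iff_inter_eq_empty.1 (hdisj.mono_right (subset_insert _ _)).symm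
    rw [inter_union_distrib_left, hTN, empty_union, inter_eq_right.2 hBN]
  simp [localWeight, hv, hinter]

lemma sum_indepFibre_localWeight_sub_nonneg {d : ℝ} (hd : 1 ≤ d) (hG : G.CliqueFree 3)
    (hT : G.IsIndepSet T) (hdisj : Disjoint T (insert v (G.neighborFinset v))) :
    0 ≤ ∑ W ∈ indepFibre G v T, (localWeight G d W v - logb 2 d / 8) := by
  set x := #(freeNeighbors G v T)
  have hcard : 2 * ∑ B ∈ (freeNeighbors G v T).powerset, (#B : ℝ) = x * 2 ^ x := by
    exact_mod_cast two_mul_sum_card_powerset _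
  have hunion : ∑ B ∈ (freeNeighbors G v T).powerset,
      (localWeight G d (T ∪ B) v - logb 2 d / 8) = x * 2 ^ x / 2 - 2 ^ x * (logb 2 d / 8) := by
    rw [sum_sub_distrib, sum_const, card_powerset, nsmul_eq_mul, Nat.cast_pow, Nat.cast_ofNat,
      sum_congr rfl fun B hB ↦ localWeight_union d hdisj (mem_powerset.1 hB)]
    linarith
  rw [sum_indepFibre _ hG hT hdisj, hunion]
  linarith [localWeight_insert_self (G := G) (v := v) (T := T) d,
    logb_div_mul_two_pow_add_one_le hd x]

lemma sum_isIndepSet_localWeight_sub_nonneg {d : ℝ} (hd : 1 ≤ d) (hG : G.CliqueFree 3) (v : V) :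
    0 ≤ ∑ W with G.IsIndepSet (W : Finset V), (localWeight G d W v - logb 2 d / 8) := by
  rw [← sum_fiberwise _ fun W ↦ W \ insert v (G.neighborFinset v)]
  refine sum_nonneg fun T _ ↦ ?_
  rw [filter_filter]
  rcases (indepFibre G v T).eq_empty_or_nonempty with hempty | ⟨W, hW⟩
  · exact (sum_eq_zero fun W hW ↦ absurd hW (by rw [← indepFibre, hempty]; simp)).ge
  · obtain ⟨hindep, rfl⟩ := mem_indepFibre.1 hW
    exact sum_indepFibre_localWeight_sub_nonneg hd hG (Set.Pairwise.mono (by simp) hindep)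
      sdiff_disjoint

lemma sum_card_neighborFinset_inter (G : SimpleGraph V) (W : Finset V) :
    ∑ v, #(G.neighborFinset v ∩ W) = ∑ w ∈ W, G.degree w := by
  simp_rw [← card_neighborFinset_eq_degree, neighborFinset_eq_filter, filter_inter, univ_inter]
  refine (sum_card_bipartiteAbove_eq_sum_card_bipartiteBelow G.Adj).trans (sum_congr rfl ?_)
  simp only [bipartiteBelow, G.adj_comm, implies_true]

lemma sum_localWeight_le {d : ℝ} (hdeg : ∀ v, (G.degree v : ℝ) ≤ d) (W : Finset V) :
    ∑ v, localWeight G d W v ≤ 2 * d * #W := by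
  have hinter : (∑ v, #(G.neighborFinset v ∩ W) : ℝ) ≤ #W * d := by
    rw [← Nat.cast_sum, sum_card_neighborFinset_inter, Nat.cast_sum, ← nsmul_eq_mul]
    exact sum_le_card_nsmul _ _ _ fun w _ ↦ hdeg w
  simp only [localWeight, sum_add_distrib, sum_ite_mem, univ_inter, sum_const, nsmul_eq_mul]
  linarith

/-- Shearer's bound. The proof is Alon's: average `localWeight` over all independent sets. -/
theorem card_mul_logb_le_mul_indepNum {d : ℝ} (hd : 1 ≤ d) (hG : G.CliqueFree 3)
    (hdeg : ∀ v, (G.degree v : ℝ) ≤ d) :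
    Fintype.card V * (logb 2 d / 8) ≤ 2 * d * G.indepNum := by
  have hsum : 0 ≤ ∑ W with G.IsIndepSet (W : Finset V),
      ∑ v, (localWeight G d W v - logb 2 d / 8) := by
    rw [sum_comm]
    exact sum_nonneg fun v _ ↦ sum_isIndepSet_localWeight_sub_nonneg hd hG v
  obtain ⟨W, hW, hWsum⟩ : ∃ W ∈ ({W | G.IsIndepSet W} : Finset (Finset V)),
      0 ≤ ∑ v, (localWeight G d W v - logb 2 d / 8) := by
    refine exists_le_of_sum_le ⟨∅, by simp⟩ ?_
    simpa using hsum
  rw [sum_sub_distrib, sum_const, card_univ, nsmul_eq_mul, sub_nonneg] at hWsum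
  calc Fintype.card V * (logb 2 d / 8) ≤ ∑ v, localWeight G d W v := hWsum
    _ ≤ 2 * d * #W := sum_localWeight_le hdeg W
    _ ≤ 2 * d * G.indepNum := by
        gcongr
        exact (mem_filter.1 hW).2.card_le_indepNum

lemma degree_le_indepNum (hG : G.CliqueFree 3) (v : V) : G.degree v ≤ G.indepNum := by
  rw [← card_neighborFinset_eq_degree]
  refine IsIndepSet.card_le_indepNum ?_
  rw [coe_neighborFinset]
  exact isIndepSet_neighborSet_of_triangleFree G hG v

lemma one_le_logb_two {x : ℝ} (hx : 2 ≤ x) : 1 ≤ logb 2 x := by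
  rwa [le_logb_iff_rpow_le one_lt_two (by linarith), rpow_one]

theorem sqrt_card_mul_logb_le_indepNum (hG : G.CliqueFree 3) (hV : 2 ≤ Fintype.card V) :
    1 / 32 * √(Fintype.card V * logb 2 (Fintype.card V)) ≤ G.indepNum := by
  set n := Fintype.card V
  have hn : (2 : ℝ) ≤ n := by exact_mod_cast hV
  have hlog := one_le_logb_two hn
  set d := √(n * logb 2 n)
  have hdn : √n ≤ d := sqrt_le_sqrt (le_mul_of_one_le_right n.cast_nonneg hlog)
  have hd : 1 ≤ d := (one_le_sqrt.2 (by linarith)).trans hdn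
  by_cases hdeg : ∀ v, (G.degree v : ℝ) ≤ d
  · have hlogd : logb 2 n / 2 ≤ logb 2 d := by
      rw [logb, div_right_comm, ← log_sqrt n.cast_nonneg]
      exact logb_le_logb_of_le one_lt_two (by positivity) hdn
    refine le_of_mul_le_mul_left (a := d) ?_ (by linarith)
    calc d * (1 / 32 * d) = n * (logb 2 n / 2 / 8) / 2 := by
          rw [mul_left_comm, mul_self_sqrt (mul_nonneg n.cast_nonneg (by linarith))]
          ring
      _ ≤ n * (logb 2 d / 8) / 2 := by gcongr
      _ ≤ 2 * d * G.indepNum / 2 := by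
          gcongr ?_ / 2
          exact card_mul_logb_le_mul_indepNum hd hG hdeg
      _ = d * G.indepNum := by ring
  · push Not at hdeg
    obtain ⟨v, hv⟩ := hdeg
    calc 1 / 32 * d ≤ d := by linarith
      _ ≤ G.degree v := hv.le
      _ ≤ G.indepNum := by exact_mod_cast degree_le_indepNum hG v

end TriangleFreeLowerBound

section Colorings
open Finset

variable {n : ℕ} {c : Coloring n}

lemma h2_le {k : ℕ} (h : ∀ S, TwoColored c S → #S ≤ k) : h2 c ≤ k :=
  csSup_le' <| by
    rintro _ ⟨S, hS, rfl⟩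
    exact h S hS

lemma card_le_h2 {S : Finset (Fin n)} (hS : TwoColored c S) : #S ≤ h2 c := by
  refine le_csSup ⟨n, ?_⟩ ⟨S, hS, rfl⟩
  rintro _ ⟨T, -, rfl⟩
  exact card_finset_fin_le T

/-- The graph of red edges of a coloring. -/
def redGraph (c : Coloring n) : SimpleGraph (Fin n) where
  Adj i j := i ≠ j ∧ c.col i j = .r
  symm := ⟨fun i j h ↦ ⟨h.1.symm, c.symm i j ▸ h.2⟩⟩
  loopless := ⟨fun _ h ↦ h.1 rfl⟩

lemma contains_Prrr_iff : Contains c Prrr ↔ ∃ i j k, (redGraph c).Adj i j ∧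
    (redGraph c).Adj j k ∧ (redGraph c).Adj i k := by
  have hpattern (i j k : Fin n) : triPattern c i j k = Prrr ↔
      c.col i j = .r ∧ c.col j k = .r ∧ c.col i k = .r := by
    change triPattern c i j k = Multiset.replicate 3 .r ↔ _
    simp [triPattern, -Multiset.replicate_succ, Multiset.eq_replicate]
  simp only [Contains, hpattern, redGraph]
  grind

lemma avoids_Prrr_iff : Avoids c {Prrr} ↔ (redGraph c).CliqueFree 3 := by
  simp only [Avoids, Set.mem_singleton_iff, forall_eq, contains_Prrr_iff, SimpleGraph.CliqueFree,
    SimpleGraph.is3Clique_iff, not_exists]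
  grind

lemma indepNum_redGraph_le_h2 (c : Coloring n) : (redGraph c).indepNum ≤ h2 c := by
  obtain ⟨S, hS⟩ := (redGraph c).exists_isNIndepSet_indepNum
  rw [← hS.card_eq]
  exact card_le_h2 ⟨.r, fun i hi j hj hij h ↦ hS.isIndepSet hi hj hij ⟨hij, h⟩⟩

open scoped Classical in
/-- The vertices are laid out in rows of length `r`. Edges of `G` are red; the other edges are
yellow inside a row and blue between rows. -/
noncomputable def gridColoring (G : SimpleGraph (Fin n)) (r : ℕ) : Coloring n where
  col i j := if G.Adj i j then .r else if (i : ℕ) / r = j / r then .y else .b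
  symm i j := by simp only [G.adj_comm, eq_comm]

variable {G : SimpleGraph (Fin n)} {r : ℕ} {S : Finset (Fin n)}

@[simp]
lemma redGraph_gridColoring : redGraph (gridColoring G r) = G := by
  ext i j
  simp only [redGraph, gridColoring]
  grind [G.ne_of_adj]

lemma gridColoring_adj_of_ne_yellow {i j : Fin n} (hrow : (i : ℕ) / r = j / r)
    (hij : (gridColoring G r).col i j ≠ .y) : G.Adj i j := by
  by_contra h
  simp [gridColoring, h, hrow] at hij

lemma gridColoring_adj_of_ne_blue {i j : Fin n} (hrow : (i : ℕ) / r ≠ j / r)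
    (hij : (gridColoring G r).col i j ≠ .b) : G.Adj i j := by
  by_contra h
  simp [gridColoring, h, hrow] at hij

lemma card_le_two_of_isClique (hG : G.CliqueFree 3) (hS : G.IsClique S) : #S ≤ 2 := by
  by_contra! h
  exact hG.mono h S ⟨hS, rfl⟩

lemma card_image_row_le (hr : n ≤ r * r) : #(S.image fun i ↦ i.val / r) ≤ r := by
  calc #(S.image fun i ↦ i.val / r) ≤ #(range r) := card_le_card <| image_subset_iff.2
        fun i _ ↦ mem_range.2 (Nat.div_lt_of_lt_mul (i.2.trans_le hr))
    _ = r := card_range r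

lemma card_row_le (hr : 0 < r) (a : ℕ) : #{i ∈ S | i.val / r = a} ≤ r := by
  calc #{i ∈ S | i.val / r = a} ≤ #(range r) := by
        refine card_le_card_of_injOn (fun i : Fin n ↦ (i : ℕ) % r) (fun i _ ↦ ?_)
          fun i hi j hj hij ↦ ?_
        · simpa using Nat.mod_lt _ hr
        · rw [mem_coe, mem_filter] at hi hj
          rw [Fin.ext_iff, ← Nat.div_add_mod i.val r, ← Nat.div_add_mod j.val r, hi.2, hj.2]
          exact congr_arg _ hij
    _ = r := card_range r

lemma card_le_of_forall_ne_yellow (hG : G.CliqueFree 3) (hr : n ≤ r * r)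
    (hS : ∀ i ∈ S, ∀ j ∈ S, i ≠ j → (gridColoring G r).col i j ≠ .y) : #S ≤ 2 * r := by
  have hrow : ∀ a ∈ S.image fun i ↦ i.val / r, #{i ∈ S | i.val / r = a} ≤ 2 := by
    refine fun a _ ↦ card_le_two_of_isClique hG fun i hi j hj hij ↦ ?_
    rw [mem_coe, mem_filter] at hi hj
    exact gridColoring_adj_of_ne_yellow (hi.2.trans hj.2.symm) (hS i hi.1 j hj.1 hij)
  exact (card_le_mul_card_image S 2 hrow).trans (by gcongr; exact card_image_row_le hr)

lemma card_le_of_forall_ne_blue (hG : G.CliqueFree 3) (hr : 0 < r)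
    (hS : ∀ i ∈ S, ∀ j ∈ S, i ≠ j → (gridColoring G r).col i j ≠ .b) : #S ≤ 2 * r := by
  obtain ⟨T, hTS, hTinj, hTimage⟩ := exists_subset_injOn_image_eq_of_surjOn _
    (S.image fun i ↦ i.val / r) (by simpa using Set.surjOn_image _ _)
  have hT : #T ≤ 2 := card_le_two_of_isClique hG fun i hi j hj hij ↦
    gridColoring_adj_of_ne_blue (hTinj.ne hi hj hij) (hS i (hTS hi) j (hTS hj) hij)
  calc #S ≤ r * #(S.image fun i ↦ i.val / r) :=
        card_le_mul_card_image S r fun a _ ↦ card_row_le hr a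
    _ = r * #T := by rw [← hTimage, card_image_of_injOn hTinj]
    _ ≤ 2 * r := by rw [mul_comm]; gcongr

lemma h2_gridColoring_le (hG : G.CliqueFree 3) (hr₀ : 0 < r) (hr : n ≤ r * r) :
    h2 (gridColoring G r) ≤ max G.indepNum (2 * r) := by
  refine h2_le fun S ↦ ?_
  rintro ⟨_ | _ | _, hS⟩
  · refine le_max_of_le_left (SimpleGraph.IsIndepSet.card_le_indepNum fun i hi j hj hij h ↦ ?_)
    exact hS i hi j hj hij (by simp [gridColoring, h])
  · exact le_max_of_le_right (card_le_of_forall_ne_blue hG hr₀ hS)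
  · exact le_max_of_le_right (card_le_of_forall_ne_yellow hG hr hS)

end Colorings

section Bounds
open Real Filter

lemma log_le_logb_two {x : ℝ} (hx : 1 ≤ x) : log x ≤ logb 2 x :=
  le_div_self (log_nonneg hx) (log_pos one_lt_two) (by linarith [log_two_lt_d9])

theorem sqrt_mul_logb_le_h2 {n : ℕ} {c : Coloring n} (hn : 2 ≤ n) (hc : Avoids c {Prrr}) :
    1 / 32 * √(n * logb 2 n) ≤ h2 c := by
  have hindep := sqrt_card_mul_logb_le_indepNum (avoids_Prrr_iff.1 hc) (by simpa using hn)
  rw [Fintype.card_fin] at hindep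
  exact hindep.trans (by exact_mod_cast indepNum_redGraph_le_h2 c)

theorem eventually_exists_h2_le : ∀ᶠ n : ℕ in atTop, ∃ c : Coloring n,
    Avoids c {Prrr} ∧ (h2 c : ℝ) ≤ 1920000000 * √(n * logb 2 n) := by
  filter_upwards [eventually_exists_cliqueFree_indepNum_le, eventually_ge_atTop 2]
    with n ⟨G, hG, hindep⟩ hn
  have hn' : (2 : ℝ) ≤ n := by exact_mod_cast hn
  have hsqrt : √n ≤ √(n * logb 2 n) :=
    sqrt_le_sqrt (le_mul_of_one_le_right n.cast_nonneg (one_le_logb_two hn'))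
  have hone : 1 ≤ √(n : ℝ) := one_le_sqrt.2 (by linarith)
  refine ⟨gridColoring G (n.sqrt + 1), avoids_Prrr_iff.2 (by rwa [redGraph_gridColoring]), ?_⟩
  calc (h2 (gridColoring G (n.sqrt + 1)) : ℝ) ≤ max (G.indepNum : ℝ) (2 * (n.sqrt + 1)) := by
        exact_mod_cast h2_gridColoring_le hG n.sqrt.succ_pos (Nat.lt_succ_sqrt n).le
    _ ≤ 1920000000 * √(n * logb 2 n) := max_le ?_ ?_
  · calc (G.indepNum : ℝ) ≤ 60000000 * (32 * √(n * log n)) := hindep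
      _ ≤ 60000000 * (32 * √(n * logb 2 n)) := by
          gcongr
          exact log_le_logb_two (by linarith)
      _ = 1920000000 * √(n * logb 2 n) := by ring
  · linarith [nat_sqrt_le_real_sqrt (a := n)]

lemma h2n_le {n : ℕ} {c : Coloring n} {H : Set (Multiset Col)} (hc : Avoids c H) :
    h2n n H ≤ h2 c :=
  Nat.sInf_le ⟨c, hc, rfl⟩

lemma exists_h2_eq_h2n {n : ℕ} {H : Set (Multiset Col)} (hH : ∃ c : Coloring n, Avoids c H) :
    ∃ c : Coloring n, Avoids c H ∧ h2 c = h2n n H :=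
  have hne : {m | ∃ c : Coloring n, Avoids c H ∧ h2 c = m}.Nonempty :=
    hH.imp' h2 fun c hc ↦ ⟨c, hc, rfl⟩
  Nat.sInf_mem hne

end Bounds

end TwoBites

theorem stmt1 :
    ∃ C1 C2 : ℝ, 0 < C1 ∧ 0 < C2 ∧ ∃ n0 : ℕ, ∀ n : ℕ, n0 ≤ n →
      C1 * Real.sqrt (n * Real.logb 2 n) ≤ (h2n n {Prrr} : ℝ) ∧
      (h2n n {Prrr} : ℝ) ≤ C2 * Real.sqrt (n * Real.logb 2 n) := by
  obtain ⟨n0, hn0⟩ := Filter.eventually_atTop.1 TwoBites.eventually_exists_h2_le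
  refine ⟨1 / 32, 1920000000, by norm_num, by norm_num, max n0 2, fun n hn ↦ ?_⟩
  obtain ⟨c, hc, hupper⟩ := hn0 n (le_of_max_le_left hn)
  obtain ⟨c', hc', hmin⟩ := TwoBites.exists_h2_eq_h2n ⟨c, hc⟩
  refine ⟨hmin ▸ TwoBites.sqrt_mul_logb_le_h2 (le_of_max_le_right hn) hc', ?_⟩
  exact hupper.trans' (by exact_mod_cast TwoBites.h2n_le hc)
end
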